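/- arXiv:1803.03783 — 4 statements merged into one kernel-verified Lean document; each statement's English description precedes it below -/
import Mathlib

section
/- Let α > 0, β > 0, ρ > 0 and 0 < a. For every continuous function u on [a, ∞) and every t ≥ a, the Katugampola fractional integrals satisfy the semigroup property I_{a+}^{α,ρ} ( I_{a+}^{β,ρ} u )(t) = I_{a+}^{α+β,ρ} u(t). -/
open MeasureTheory Real Set

/-- The Katugampola fractional integral
`I_{a+}^{α,ρ} u(t) = (ρ^{1-α}/Γ(α)) ∫_a^t s^{ρ-1} u(s) / (t^ρ - s^ρ)^{1-α} ds`. -/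
noncomputable def katugampolaIntegral (α ρ a : ℝ) (u : ℝ → ℝ) (t : ℝ) : ℝ :=
  ρ ^ (1 - α) / Real.Gamma α *
    ∫ s in a..t, s ^ (ρ - 1) * u s / (t ^ ρ - s ^ ρ) ^ (1 - α)

/-!
With `ψ(s) = s ^ ρ / ρ`, the Katugampola integral is exactly the Riemann–Liouville integral
`(1 / Γ(α)) ∫_a^t ψ'(s) (ψ(t) - ψ(s)) ^ (α - 1) u(s) ds` with respect to `ψ`: all powers of `ρ`
are absorbed. For such integrals Fubini on the triangle `a < y < x < t` leaves the inner integral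
`∫_y^t ψ'(x) (ψ(t) - ψ(x)) ^ (α - 1) (ψ(x) - ψ(y)) ^ (β - 1) dx`, which the substitution
`r = ψ(x) - ψ(y)` turns into Euler's beta integral `B(α, β) (ψ(t) - ψ(y)) ^ (α + β - 1)`. As the
iterated kernel is nonnegative, the same computation gives the integrability Fubini requires.
-/

section Triangle

variable {X E : Type*} [LinearOrder X] [NormedAddCommGroup E] {a t : X}

/-- The triangle `a < y < x < t` in the plane of pairs `(x, y)`, over which an iterated
Volterra-type integral is taken; the outer variable comes first. -/
def openTriangle (a t : X) : Set (X × X) :=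
  {p | a < p.2 ∧ p.2 < p.1 ∧ p.1 < t}

theorem openTriangle_subset_prod : openTriangle a t ⊆ Ioo a t ×ˢ Ioo a t :=
  fun _ hp => ⟨⟨hp.1.trans hp.2.1, hp.2.2⟩, hp.1, hp.2.1.trans hp.2.2⟩

theorem openTriangle_indicator_left (F : X × X → E) (x y : X) :
    (openTriangle a t).indicator F (x, y)
      = (Ioo a t).indicator (fun x => (Ioo a x).indicator (fun y => F (x, y)) y) x := by
  simp only [indicator_apply, openTriangle, mem_ofPred_eq, mem_Ioo]
  grind

theorem openTriangle_indicator_right (F : X × X → E) (x y : X) :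
    (openTriangle a t).indicator F (x, y)
      = (Ioo a t).indicator (fun y => (Ioo y t).indicator (fun x => F (x, y)) x) y := by
  simp only [indicator_apply, openTriangle, mem_ofPred_eq, mem_Ioo]
  grind

variable [TopologicalSpace X] [OrderClosedTopology X] [SecondCountableTopology X]
  [MeasurableSpace X] [OpensMeasurableSpace X] {μ ν : Measure X} [SFinite μ] [SFinite ν]

theorem measurableSet_openTriangle : MeasurableSet (openTriangle a t) :=
  (measurableSet_lt measurable_const measurable_snd).inter
    ((measurableSet_lt measurable_snd measurable_fst).inter
      (measurableSet_lt measurable_fst measurable_const))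

theorem integrableOn_openTriangle_of_sections {F : X × X → E}
    (hF : AEStronglyMeasurable F ((μ.prod ν).restrict (openTriangle a t)))
    (hsection : ∀ y ∈ Ioo a t, IntegrableOn (fun x => F (x, y)) (Ioo y t) μ)
    (hnorm : IntegrableOn (fun y => ∫ x in Ioo y t, ‖F (x, y)‖ ∂μ) (Ioo a t) ν) :
    IntegrableOn F (openTriangle a t) (μ.prod ν) := by
  rw [← integrable_indicator_iff measurableSet_openTriangle,
    integrable_prod_iff' ((aestronglyMeasurable_indicator_iff measurableSet_openTriangle).2 hF)]
  constructor
  · refine ae_of_all _ fun y => ?_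
    simp only [openTriangle_indicator_right]
    by_cases hy : y ∈ Ioo a t
    · simp only [indicator_of_mem hy]
      exact (hsection y hy).integrable_indicator measurableSet_Ioo
    · simp only [indicator_of_notMem hy]
      exact integrable_zero ..
  · refine (hnorm.integrable_indicator measurableSet_Ioo).congr (ae_of_all _ fun y => ?_)
    simp only [openTriangle_indicator_right]
    by_cases hy : y ∈ Ioo a t
    · simp only [indicator_of_mem hy, norm_indicator_eq_indicator_norm,
        integral_indicator measurableSet_Ioo]
    · simp only [indicator_of_notMem hy, norm_zero, integral_zero]

theorem setIntegral_setIntegral_swap_openTriangle [NormedSpace ℝ E] {F : X × X → E}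
    (hF : IntegrableOn F (openTriangle a t) (μ.prod ν)) :
    ∫ x in Ioo a t, ∫ y in Ioo a x, F (x, y) ∂ν ∂μ
      = ∫ y in Ioo a t, ∫ x in Ioo y t, F (x, y) ∂μ ∂ν := by
  have hleft (x : X) : ∫ y, (openTriangle a t).indicator F (x, y) ∂ν
      = (Ioo a t).indicator (fun x => ∫ y in Ioo a x, F (x, y) ∂ν) x := by
    by_cases hx : x ∈ Ioo a t <;>
      simp [openTriangle_indicator_left, hx, integral_indicator measurableSet_Ioo]
  have hright (y : X) : ∫ x, (openTriangle a t).indicator F (x, y) ∂μ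
      = (Ioo a t).indicator (fun y => ∫ x in Ioo y t, F (x, y) ∂μ) y := by
    by_cases hy : y ∈ Ioo a t <;>
      simp [openTriangle_indicator_right, hy, integral_indicator measurableSet_Ioo]
  have hswap := integral_integral_swap (f := fun x y => (openTriangle a t).indicator F (x, y))
    (hF.integrable_indicator measurableSet_openTriangle)
  simpa only [hleft, hright, integral_indicator measurableSet_Ioo] using hswap

end Triangle

theorem integral_rpow_mul_sub_rpow {α β L : ℝ} (hα : 0 < α) (hβ : 0 < β) (hL : 0 < L) :
    ∫ x in (0 : ℝ)..L, x ^ (α - 1) * (L - x) ^ (β - 1)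
      = ProbabilityTheory.beta α β * L ^ (α + β - 1) := by
  have hbeta : (ProbabilityTheory.beta α β : ℂ) = Complex.betaIntegral α β := by
    rw [Complex.betaIntegral_eq_Gamma_mul_div _ _ (by simpa) (by simpa)]
    simp [ProbabilityTheory.beta, ← Complex.Gamma_ofReal]
  apply Complex.ofReal_injective
  calc ((∫ x in (0 : ℝ)..L, x ^ (α - 1) * (L - x) ^ (β - 1) : ℝ) : ℂ)
      = ∫ x in (0 : ℝ)..L, (x : ℂ) ^ ((α : ℂ) - 1) * ((L : ℂ) - x) ^ ((β : ℂ) - 1) := by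
        rw [← intervalIntegral.integral_ofReal]
        refine intervalIntegral.integral_congr fun x hx => ?_
        rw [uIcc_of_le hL.le] at hx
        simp [Complex.ofReal_cpow hx.1, Complex.ofReal_cpow (sub_nonneg.2 hx.2)]
    _ = (L : ℂ) ^ ((α : ℂ) + β - 1) * Complex.betaIntegral α β :=
        Complex.betaIntegral_scaled _ _ hL
    _ = ((ProbabilityTheory.beta α β * L ^ (α + β - 1) : ℝ) : ℂ) := by
        simp [hbeta, Complex.ofReal_cpow hL.le, mul_comm]

/-- The Riemann–Liouville fractional integral `I_{a+}^{α;ψ} u(t)` of order `α` of `u` with respect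
to the function `ψ`, intended for `ψ` increasing on `[a, t]`; the classical one has `ψ = id`.
Integrating over `Ioo a t` makes it vanish for `t ≤ a`. -/
noncomputable def riemannLiouvilleIntegral {E : Type*} [NormedAddCommGroup E] [NormedSpace ℝ E]
    (α : ℝ) (ψ : ℝ → ℝ) (a : ℝ) (u : ℝ → E) (t : ℝ) : E :=
  (Gamma α)⁻¹ • ∫ s in Ioo a t, (deriv ψ s * (ψ t - ψ s) ^ (α - 1)) • u s

/-- The integrand of Euler's beta integral transported to `(s, t)` by `ψ`. It is the kernel, in the
intermediate variable `x`, of two successive Riemann–Liouville integrals with respect to `ψ`. -/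
noncomputable def betaKernel (α β : ℝ) (ψ : ℝ → ℝ) (s t x : ℝ) : ℝ :=
  deriv ψ x * ((ψ t - ψ x) ^ (α - 1) * (ψ x - ψ s) ^ (β - 1))

section BetaKernel

variable {α β s t : ℝ} {ψ : ℝ → ℝ}

theorem strictMonoOn_Icc_of_deriv_pos (hψ : ContinuousOn ψ (Icc s t))
    (hψ' : ∀ x ∈ Ioo s t, 0 < deriv ψ x) : StrictMonoOn ψ (Icc s t) :=
  strictMonoOn_of_deriv_pos (convex_Icc s t) hψ (by rwa [interior_Icc])

theorem betaKernel_nonneg (hψ : ContinuousOn ψ (Icc s t)) (hψ' : ∀ x ∈ Ioo s t, 0 < deriv ψ x)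
    {x : ℝ} (hx : x ∈ Ioo s t) : 0 ≤ betaKernel α β ψ s t x := by
  have hmono := (strictMonoOn_Icc_of_deriv_pos hψ hψ').monotoneOn
  have hst := hx.1.le.trans hx.2.le
  have hsx := hmono (left_mem_Icc.2 hst) (Ioo_subset_Icc_self hx) hx.1.le
  have hxt := hmono (Ioo_subset_Icc_self hx) (right_mem_Icc.2 hst) hx.2.le
  exact mul_nonneg (hψ' x hx).le
    (mul_nonneg (rpow_nonneg (sub_nonneg.2 hxt) _) (rpow_nonneg (sub_nonneg.2 hsx) _))

theorem integral_betaKernel (hα : 0 < α) (hβ : 0 < β) (hst : s < t)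
    (hψ : ContinuousOn ψ (Icc s t)) (hψ' : ∀ x ∈ Ioo s t, 0 < deriv ψ x) :
    ∫ x in Ioo s t, betaKernel α β ψ s t x
      = ProbabilityTheory.beta α β * (ψ t - ψ s) ^ (α + β - 1) := by
  have hlt : ψ s < ψ t := strictMonoOn_Icc_of_deriv_pos hψ hψ' (left_mem_Icc.2 hst.le)
    (right_mem_Icc.2 hst.le) hst
  have hsubst := integral_Icc_deriv_smul_of_deriv_nonneg
    (g := fun r => (ψ t - r) ^ (α - 1) * (r - ψ s) ^ (β - 1)) hψ
    (fun x hx => (differentiableAt_of_deriv_ne_zero (hψ' x hx).ne').hasDerivAt)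
    (fun x hx => (hψ' x hx).le) hst.le
  have hshift := intervalIntegral.integral_comp_sub_left (a := ψ s) (b := ψ t)
    (fun r => r ^ (α - 1) * ((ψ t - ψ s) - r) ^ (β - 1)) (ψ t)
  simp only [sub_sub_sub_cancel_left, sub_self] at hshift
  rw [← integral_Icc_eq_integral_Ioo]
  refine hsubst.trans ?_
  rw [integral_Icc_eq_integral_Ioc, ← intervalIntegral.integral_of_le hlt.le, hshift,
    integral_rpow_mul_sub_rpow hα hβ (sub_pos.2 hlt)]

theorem integrableOn_betaKernel (hα : 0 < α) (hβ : 0 < β) (hst : s < t)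
    (hψ : ContinuousOn ψ (Icc s t)) (hψ' : ∀ x ∈ Ioo s t, 0 < deriv ψ x) :
    IntegrableOn (betaKernel α β ψ s t) (Ioo s t) := by
  have hlt : ψ s < ψ t := strictMonoOn_Icc_of_deriv_pos hψ hψ' (left_mem_Icc.2 hst.le)
    (right_mem_Icc.2 hst.le) hst
  refine Integrable.of_integral_ne_zero ?_
  rw [integral_betaKernel hα hβ hst hψ hψ']
  exact (mul_pos (ProbabilityTheory.beta_pos hα hβ) (rpow_pos_of_pos (sub_pos.2 hlt) _)).ne'

end BetaKernel

section RiemannLiouville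

variable {E : Type*} [NormedAddCommGroup E] [NormedSpace ℝ E] {α β a t : ℝ} {ψ : ℝ → ℝ}
  {u : ℝ → E}

theorem integrableOn_rpow_smul_of_continuousOn (hα : 0 < α) (hψ : ContinuousOn ψ (Icc a t))
    (hψ' : ∀ s ∈ Ioo a t, 0 < deriv ψ s) (hu : ContinuousOn u (Icc a t)) :
    IntegrableOn (fun s => (deriv ψ s * (ψ t - ψ s) ^ (α - 1)) • u s) (Ioo a t) := by
  rcases le_or_gt t a with hta | hat
  · simp [Ioo_eq_empty hta.not_gt]
  · have hweight : IntegrableOn (fun s => deriv ψ s * (ψ t - ψ s) ^ (α - 1)) (Ioo a t) := by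
      refine (integrableOn_betaKernel hα one_pos hat hψ hψ').congr_fun (fun s _ => ?_)
        measurableSet_Ioo
      simp [betaKernel]
    exact hweight.smul_continuousOn_of_subset hu measurableSet_Ioo isCompact_Icc
      Ioo_subset_Icc_self

theorem aestronglyMeasurable_betaKernel_smul (hψ : ContinuousOn ψ (Icc a t)) {v : ℝ → E}
    (hv : AEStronglyMeasurable v (volume.restrict (Ioo a t))) :
    AEStronglyMeasurable (fun p : ℝ × ℝ => betaKernel α β ψ p.2 t p.1 • v p.2)
      ((volume.prod volume).restrict (openTriangle a t)) := by
  refine AEStronglyMeasurable.mono_measure ?_ (Measure.restrict_mono_set _ openTriangle_subset_prod)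
  rw [← Measure.prod_restrict]
  have hψm : AEMeasurable ψ (volume.restrict (Ioo a t)) :=
    (hψ.mono Ioo_subset_Icc_self).aemeasurable measurableSet_Ioo
  have hderiv : AEMeasurable (deriv ψ) (volume.restrict (Ioo a t)) :=
    (measurable_deriv ψ).aemeasurable
  exact (hderiv.comp_fst.mul (((hψm.comp_fst.const_sub _).pow_const _).mul
    ((hψm.comp_fst.sub hψm.comp_snd).pow_const _))).aestronglyMeasurable.smul hv.comp_snd

theorem aestronglyMeasurable_deriv_smul (hψ : ContinuousOn ψ (Icc a t))
    (hψ' : ∀ s ∈ Ioo a t, 0 < deriv ψ s)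
    (hu : AEStronglyMeasurable (fun s => (deriv ψ s * (ψ t - ψ s) ^ (α - 1)) • u s)
      (volume.restrict (Ioo a t))) :
    AEStronglyMeasurable (fun s => deriv ψ s • u s) (volume.restrict (Ioo a t)) := by
  have hψm : AEMeasurable ψ (volume.restrict (Ioo a t)) :=
    (hψ.mono Ioo_subset_Icc_self).aemeasurable measurableSet_Ioo
  refine (((hψm.const_sub (ψ t)).pow_const (α - 1)).inv.aestronglyMeasurable.smul hu).congr
    (ae_restrict_of_forall_mem measurableSet_Ioo fun s hs => ?_)
  have hlt : ψ s < ψ t := strictMonoOn_Icc_of_deriv_pos hψ hψ' (Ioo_subset_Icc_self hs)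
    (right_mem_Icc.2 (hs.1.trans hs.2).le) hs.2
  have hne := (rpow_pos_of_pos (sub_pos.2 hlt) (α - 1)).ne'
  simp only [Pi.smul_apply', Pi.inv_apply, smul_smul]
  field_simp

theorem integrableOn_betaKernel_smul (hα : 0 < α) (hβ : 0 < β) (hψ : ContinuousOn ψ (Icc a t))
    (hψ' : ∀ s ∈ Ioo a t, 0 < deriv ψ s)
    (hu : IntegrableOn (fun s => (deriv ψ s * (ψ t - ψ s) ^ (α + β - 1)) • u s) (Ioo a t)) :
    IntegrableOn (fun p : ℝ × ℝ => betaKernel α β ψ p.2 t p.1 • deriv ψ p.2 • u p.2)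
      (openTriangle a t) (volume.prod volume) := by
  have hψy (y : ℝ) (hy : y ∈ Ioo a t) : ContinuousOn ψ (Icc y t) :=
    hψ.mono (Icc_subset_Icc_left hy.1.le)
  have hψ'y (y : ℝ) (hy : y ∈ Ioo a t) : ∀ s ∈ Ioo y t, 0 < deriv ψ s :=
    fun s hs => hψ' s (Ioo_subset_Ioo_left hy.1.le hs)
  refine integrableOn_openTriangle_of_sections (aestronglyMeasurable_betaKernel_smul hψ
    (aestronglyMeasurable_deriv_smul hψ hψ' hu.aestronglyMeasurable)) (fun y hy => ?_) ?_
  · exact (integrableOn_betaKernel hα hβ hy.2 (hψy y hy) (hψ'y y hy)).integrable.smul_const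
      (deriv ψ y • u y)
  · refine IntegrableOn.congr_fun (hu.norm.const_mul (ProbabilityTheory.beta α β))
      (fun y hy => ?_) measurableSet_Ioo
    have hle : ψ y ≤ ψ t := (strictMonoOn_Icc_of_deriv_pos hψ hψ').monotoneOn
      (Ioo_subset_Icc_self hy) (right_mem_Icc.2 (hy.1.trans hy.2).le) hy.2.le
    have hkernel : ∫ x in Ioo y t, ‖betaKernel α β ψ y t x‖
        = ProbabilityTheory.beta α β * (ψ t - ψ y) ^ (α + β - 1) := by
      rw [← integral_betaKernel hα hβ hy.2 (hψy y hy) (hψ'y y hy)]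
      exact setIntegral_congr_fun measurableSet_Ioo fun x hx =>
        norm_of_nonneg (betaKernel_nonneg (hψy y hy) (hψ'y y hy) hx)
    simp only [norm_smul, norm_mul, integral_mul_const, hkernel,
      norm_of_nonneg (rpow_nonneg (sub_nonneg.2 hle) _)]
    ring

theorem riemannLiouvilleIntegral_semigroup [CompleteSpace E] (hα : 0 < α) (hβ : 0 < β)
    (hψ : ContinuousOn ψ (Icc a t)) (hψ' : ∀ s ∈ Ioo a t, 0 < deriv ψ s)
    (hu : IntegrableOn (fun s => (deriv ψ s * (ψ t - ψ s) ^ (α + β - 1)) • u s) (Ioo a t)) :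
    riemannLiouvilleIntegral α ψ a (riemannLiouvilleIntegral β ψ a u) t
      = riemannLiouvilleIntegral (α + β) ψ a u t := by
  have hΓα := (Gamma_pos_of_pos hα).ne'
  have hΓβ := (Gamma_pos_of_pos hβ).ne'
  calc riemannLiouvilleIntegral α ψ a (riemannLiouvilleIntegral β ψ a u) t
      = ((Gamma α)⁻¹ * (Gamma β)⁻¹) •
          ∫ x in Ioo a t, ∫ y in Ioo a x, betaKernel α β ψ y t x • deriv ψ y • u y := by
        rw [mul_smul, riemannLiouvilleIntegral, ← integral_smul (Gamma β)⁻¹]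
        congr! 3 with x
        rw [riemannLiouvilleIntegral, smul_comm, ← integral_smul]
        congr! 3 with y
        simp only [betaKernel, smul_smul]
        ring_nf
    _ = ((Gamma α)⁻¹ * (Gamma β)⁻¹) •
          ∫ y in Ioo a t, ∫ x in Ioo y t, betaKernel α β ψ y t x • deriv ψ y • u y := by
        rw [setIntegral_setIntegral_swap_openTriangle
          (integrableOn_betaKernel_smul hα hβ hψ hψ' hu)]
    _ = ((Gamma α)⁻¹ * (Gamma β)⁻¹) • ∫ y in Ioo a t, ProbabilityTheory.beta α β •
          (deriv ψ y * (ψ t - ψ y) ^ (α + β - 1)) • u y := by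
        congr 1
        refine setIntegral_congr_fun measurableSet_Ioo fun y hy => ?_
        have hkernel := integral_betaKernel hα hβ hy.2 (hψ.mono (Icc_subset_Icc_left hy.1.le))
          fun s hs => hψ' s (Ioo_subset_Ioo_left hy.1.le hs)
        rw [integral_smul_const, hkernel, smul_smul, smul_smul]
        ring_nf
    _ = riemannLiouvilleIntegral (α + β) ψ a u t := by
        rw [integral_smul, smul_smul, riemannLiouvilleIntegral, ProbabilityTheory.beta]
        congr 1
        field_simp

theorem riemannLiouvilleIntegral_congr {v : ℝ → E} (h : EqOn u v (Ioo a t)) :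
    riemannLiouvilleIntegral α ψ a u t = riemannLiouvilleIntegral α ψ a v t := by
  refine congrArg _ (setIntegral_congr_fun measurableSet_Ioo fun s hs => ?_)
  simp only [h hs]

end RiemannLiouville

section Katugampola

variable {α β ρ a t : ℝ} {u : ℝ → ℝ}

theorem deriv_rpow_div_const (hρ : ρ ≠ 0) (s : ℝ) :
    deriv (fun x => x ^ ρ / ρ) s = s ^ (ρ - 1) := by
  rw [deriv_div_const, Real.deriv_rpow_const, mul_div_cancel_left₀ _ hρ]

theorem rpow_mul_div_eq_deriv_smul (hρ : 0 < ρ) {s : ℝ} (hs : 0 < s) (hst : s ≤ t) :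
    ρ ^ (1 - α) * (s ^ (ρ - 1) * u s / (t ^ ρ - s ^ ρ) ^ (1 - α))
      = (deriv (fun x => x ^ ρ / ρ) s * (t ^ ρ / ρ - s ^ ρ / ρ) ^ (α - 1)) • u s := by
  have hsub : 0 ≤ t ^ ρ - s ^ ρ := sub_nonneg.2 (rpow_le_rpow hs.le hst hρ.le)
  rw [deriv_rpow_div_const hρ.ne' s, ← sub_div, div_rpow hsub hρ.le, ← neg_sub 1 α,
    rpow_neg hsub, rpow_neg hρ.le, smul_eq_mul]
  field_simp

theorem katugampolaIntegral_eq_riemannLiouvilleIntegral (hρ : 0 < ρ) (ha : 0 ≤ a) (hat : a ≤ t) :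
    katugampolaIntegral α ρ a u t = riemannLiouvilleIntegral α (fun x => x ^ ρ / ρ) a u t := by
  rw [katugampolaIntegral, riemannLiouvilleIntegral, div_mul_eq_mul_div, div_eq_inv_mul,
    smul_eq_mul, intervalIntegral.integral_of_le hat, integral_Ioc_eq_integral_Ioo,
    ← integral_const_mul]
  congr 1
  exact setIntegral_congr_fun measurableSet_Ioo fun s hs =>
    rpow_mul_div_eq_deriv_smul hρ (ha.trans_lt hs.1) hs.2.le

theorem integrableOn_katugampola_iff (hρ : 0 < ρ) (ha : 0 ≤ a) :
    IntegrableOn (fun s => s ^ (ρ - 1) * u s / (t ^ ρ - s ^ ρ) ^ (1 - α)) (Ioo a t) ↔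
      IntegrableOn (fun s => (deriv (fun x => x ^ ρ / ρ) s *
        (t ^ ρ / ρ - s ^ ρ / ρ) ^ (α - 1)) • u s) (Ioo a t) := by
  rw [← integrableOn_congr_fun (fun s hs => rpow_mul_div_eq_deriv_smul hρ (ha.trans_lt hs.1)
    hs.2.le) measurableSet_Ioo]
  exact (integrable_const_mul_iff (rpow_pos_of_pos hρ _).ne'.isUnit _).symm

theorem continuousOn_rpow_div_const (hρ : 0 < ρ) (s : Set ℝ) :
    ContinuousOn (fun x => x ^ ρ / ρ) s :=
  ((continuous_rpow_const hρ.le).div_const ρ).continuousOn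

theorem deriv_rpow_div_const_pos (hρ : 0 < ρ) {s : ℝ} (hs : 0 < s) :
    0 < deriv (fun x => x ^ ρ / ρ) s :=
  deriv_rpow_div_const hρ.ne' s ▸ rpow_pos_of_pos hs _

theorem integrableOn_katugampola_of_continuousOn (hα : 0 < α) (hρ : 0 < ρ) (ha : 0 ≤ a)
    (hu : ContinuousOn u (Icc a t)) :
    IntegrableOn (fun s => s ^ (ρ - 1) * u s / (t ^ ρ - s ^ ρ) ^ (1 - α)) (Ioo a t) :=
  (integrableOn_katugampola_iff hρ ha).2 <|
    integrableOn_rpow_smul_of_continuousOn hα (continuousOn_rpow_div_const hρ _)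
      (fun _ hs => deriv_rpow_div_const_pos hρ (ha.trans_lt hs.1)) hu

theorem katugampolaIntegral_semigroup_general (hα : 0 < α) (hβ : 0 < β) (hρ : 0 < ρ)
    (ha : 0 ≤ a) (hat : a ≤ t)
    (hu : IntegrableOn (fun s => s ^ (ρ - 1) * u s / (t ^ ρ - s ^ ρ) ^ (1 - (α + β)))
      (Ioo a t)) :
    katugampolaIntegral α ρ a (katugampolaIntegral β ρ a u) t
      = katugampolaIntegral (α + β) ρ a u t := by
  have hinner : EqOn (katugampolaIntegral β ρ a u)
      (riemannLiouvilleIntegral β (fun x => x ^ ρ / ρ) a u) (Ioo a t) :=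
    fun s hs => katugampolaIntegral_eq_riemannLiouvilleIntegral hρ ha hs.1.le
  rw [katugampolaIntegral_eq_riemannLiouvilleIntegral hρ ha hat,
    katugampolaIntegral_eq_riemannLiouvilleIntegral hρ ha hat,
    riemannLiouvilleIntegral_congr hinner]
  exact riemannLiouvilleIntegral_semigroup hα hβ (continuousOn_rpow_div_const hρ _)
    (fun _ hs => deriv_rpow_div_const_pos hρ (ha.trans_lt hs.1))
    ((integrableOn_katugampola_iff hρ ha).1 hu)

end Katugampola

/-- Semigroup property of the Katugampola fractional integral. -/
theorem katugampolaIntegral_semigroup (α β ρ a : ℝ) (hα : 0 < α) (hβ : 0 < β)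
    (hρ : 0 < ρ) (ha : 0 < a) (u : ℝ → ℝ) (hu : ContinuousOn u (Set.Ici a))
    (t : ℝ) (ht : a ≤ t) :
    katugampolaIntegral α ρ a (katugampolaIntegral β ρ a u) t
      = katugampolaIntegral (α + β) ρ a u t :=
  katugampolaIntegral_semigroup_general hα hβ hρ ha.le ht <|
    integrableOn_katugampola_of_continuousOn (add_pos hα hβ) hρ ha.le (hu.mono Icc_subset_Ici_self)
end

section
/- Let 0 < α < 1, ρ > 0, a > 0, λ ∈ ℂ, c ∈ ℂ, and let h be a continuous function on [a, ∞). If u is a continuous function on [a, ∞) satisfying the integral equation u(t) = c + λ · I_{a+}^{α,ρ} u(t) + I_{a+}^{α,ρ} h(t) for all t ≥ a, then u is given by the explicit formula u(t) = c · E_α(λ ((t^ρ - a^ρ)/ρ)^α) + ∫_a^t ((t^ρ - s^ρ)/ρ)^{α-1} E_{α,α}(λ ((t^ρ - s^ρ)/ρ)^α) s^{ρ-1} h(s) ds. -/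
open Real Set MeasureTheory

/-- The Katugampola fractional integral of a complex-valued function:
`I_{a+}^{α,ρ} u(t) = (ρ^{1-α}/Γ(α)) ∫_a^t s^{ρ-1} u(s) / (t^ρ - s^ρ)^{1-α} ds`. -/
noncomputable def katugampolaIntegralC (α ρ a : ℝ) (u : ℝ → ℂ) (t : ℝ) : ℂ :=
  ((ρ ^ (1 - α) / Real.Gamma α : ℝ) : ℂ) *
    ∫ s in a..t, ((s ^ (ρ - 1) : ℝ) : ℂ) * u s / (((t ^ ρ - s ^ ρ) ^ (1 - α) : ℝ) : ℂ)

/-- The two-parameter Mittag-Leffler function `E_{α,β}(z) = ∑_{k=0}^∞ z^k / Γ(kα + β)`. -/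
noncomputable def mittagLeffler (α β : ℝ) (z : ℂ) : ℂ :=
  ∑' k : ℕ, z ^ k / (Real.Gamma (k * α + β) : ℂ)

/-!
The change of time `x = (t^ρ - a^ρ) / ρ` turns the Katugampola integral into convolution on `[0, x]`
with the Riemann–Liouville kernel `r_α(y) = y^{α-1} / Γ(α)`. By the Beta integral
`r_β ⋆ r_γ = r_{β+γ}`, so the Neumann series `∑ₖ λ^k r_{(k+1)α}` of the equation is the
Mittag-Leffler kernel `R(y) = y^{α-1} E_{α,α}(λ y^α)`, and `R = r_α + λ (R ⋆ r_α)`. Convolving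
`u = c + r_α ⋆ (λ u + h)` with `R` and using associativity then isolates `u`.
-/

open Filter

section CausalConvolution

variable {E : Type*} [NormedAddCommGroup E] [NormedSpace ℂ E]

/-- The one-sided convolution `(k ⋆ w)(x) = ∫₀ˣ k(s) w(x - s) ds` of a scalar kernel with a
vector-valued function, in which Volterra equations of convolution type are written. -/
noncomputable def causalConv (k : ℝ → ℂ) (w : ℝ → E) (x : ℝ) : E :=
  ∫ s in (0 : ℝ)..x, k s • w (x - s)

variable {k r : ℝ → ℂ} {v w : ℝ → E} {x : ℝ}

theorem intervalIntegrable_smul_comp_sub (hx : 0 ≤ x) (hk : IntervalIntegrable k volume 0 x)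
    (hw : ContinuousOn w (Icc 0 x)) :
    IntervalIntegrable (fun s => k s • w (x - s)) volume 0 x := by
  refine hk.smul_continuousOn (hw.comp (by fun_prop) fun s hs => ?_)
  rw [uIcc_of_le hx] at hs
  exact ⟨sub_nonneg.2 hs.2, sub_le_self x hs.1⟩

theorem causalConv_add_right (hx : 0 ≤ x) (hk : IntervalIntegrable k volume 0 x)
    (hv : ContinuousOn v (Icc 0 x)) (hw : ContinuousOn w (Icc 0 x)) :
    causalConv k (v + w) x = causalConv k v x + causalConv k w x := by
  simp only [causalConv, Pi.add_apply, smul_add]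
  exact intervalIntegral.integral_add (intervalIntegrable_smul_comp_sub hx hk hv)
    (intervalIntegrable_smul_comp_sub hx hk hw)

theorem causalConv_sub_left (hx : 0 ≤ x) (hk : IntervalIntegrable k volume 0 x)
    (hr : IntervalIntegrable r volume 0 x) (hw : ContinuousOn w (Icc 0 x)) :
    causalConv (k - r) w x = causalConv k w x - causalConv r w x := by
  simp only [causalConv, Pi.sub_apply, sub_smul]
  exact intervalIntegral.integral_sub (intervalIntegrable_smul_comp_sub hx hk hw)
    (intervalIntegrable_smul_comp_sub hx hr hw)

theorem causalConv_smul_left (lam : ℂ) (k : ℝ → ℂ) (w : ℝ → E) (x : ℝ) :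
    causalConv (lam • k) w x = lam • causalConv k w x := by
  simp only [causalConv, Pi.smul_apply, smul_assoc, intervalIntegral.integral_smul]

theorem causalConv_smul_right (lam : ℂ) (k : ℝ → ℂ) (w : ℝ → E) (x : ℝ) :
    causalConv k (lam • w) x = lam • causalConv k w x := by
  simp only [causalConv, Pi.smul_apply, smul_comm _ lam, intervalIntegral.integral_smul]

theorem causalConv_const_right [CompleteSpace E] (k : ℝ → ℂ) (c : E) (x : ℝ) :
    causalConv k (fun _ => c) x = (∫ s in (0 : ℝ)..x, k s) • c :=
  intervalIntegral.integral_smul_const k c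

theorem causalConv_congr_left (hx : 0 ≤ x) (w : ℝ → E) (h : EqOn k r (Ioc 0 x)) :
    causalConv k w x = causalConv r w x := by
  simp only [causalConv, intervalIntegral.integral_of_le hx]
  exact setIntegral_congr_fun measurableSet_Ioc fun s hs => by simp only [h hs]

theorem causalConv_congr_right (hx : 0 ≤ x) (k : ℝ → ℂ) (h : EqOn v w (Icc 0 x)) :
    causalConv k v x = causalConv k w x := by
  refine intervalIntegral.integral_congr fun s hs => ?_
  rw [uIcc_of_le hx] at hs
  simp only [h ⟨sub_nonneg.2 hs.2, sub_le_self x hs.1⟩]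

theorem convolution_indicator_Icc (k : ℝ → ℂ) (w : ℝ → E) {X : ℝ} (hx : x ∈ Icc 0 X) :
    convolution (indicator (Icc 0 X) k) (indicator (Icc 0 X) w)
      (ContinuousLinearMap.lsmul ℂ ℂ) volume x = causalConv k w x := by
  rw [convolution_def, causalConv, intervalIntegral.integral_of_le hx.1,
    ← integral_Icc_eq_integral_Ioc, ← integral_indicator measurableSet_Icc]
  congr 1 with s
  have hs : s ∈ Icc 0 x ↔ s ∈ Icc 0 X ∧ x - s ∈ Icc 0 X := by
    simp only [mem_Icc] at hx ⊢
    grind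
  simp only [indicator_apply, hs, ContinuousLinearMap.lsmul_apply]
  split_ifs <;> simp_all

theorem norm_convolution_le {f g : ℝ → ℝ} {M : ℝ} (hf : Integrable f) (hg : ∀ y, ‖g y‖ ≤ M)
    (x : ℝ) :
    ‖convolution f g (ContinuousLinearMap.mul ℝ ℝ) volume x‖ ≤ ∫ s, ‖f s‖ * M := by
  refine norm_integral_le_of_norm_le (hf.norm.mul_const M) (.of_forall fun s => ?_)
  rw [ContinuousLinearMap.mul_apply', norm_mul]
  gcongr
  exact hg _

variable [CompleteSpace E]

theorem convolution_lsmul_assoc {f g : ℝ → ℂ} {h : ℝ → E} {M : ℝ} (hf : Integrable f)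
    (hg : Integrable g) (hh : Integrable h) (hM : ∀ y, ‖h y‖ ≤ M) (x : ℝ) :
    convolution (convolution f g (ContinuousLinearMap.lsmul ℂ ℂ) volume) h
        (ContinuousLinearMap.lsmul ℂ ℂ) volume x =
      convolution f (convolution g h (ContinuousLinearMap.lsmul ℂ ℂ) volume)
        (ContinuousLinearMap.lsmul ℂ ℂ) volume x := by
  refine convolution_assoc _ _ _ _ (fun a b c => smul_assoc a b c)
    hf.aestronglyMeasurable hg.aestronglyMeasurable hh.aestronglyMeasurable
    (hf.ae_convolution_exists _ hg) (hg.norm.ae_convolution_exists _ hh.norm) ?_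
  refine BddAbove.convolutionExistsAt _ (s := univ) ⟨∫ s, ‖‖g s‖‖ * M, ?_⟩ .univ (subset_univ _)
    hf.norm.integrableOn (hg.norm.integrable_convolution _ hh.norm).aestronglyMeasurable
  rintro _ ⟨y, -, rfl⟩
  exact norm_convolution_le hg.norm (fun z => by simpa using hM z) y

theorem causalConv_assoc (hx : 0 ≤ x) (hk : IntervalIntegrable k volume 0 x)
    (hr : IntervalIntegrable r volume 0 x) (hw : ContinuousOn w (Icc 0 x)) :
    causalConv (causalConv k r) w x = causalConv k (causalConv r w) x := by
  have integrable_cutoff : ∀ {f : ℝ → ℂ}, IntervalIntegrable f volume 0 x →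
      Integrable (indicator (Icc 0 x) f) := fun hf =>
    (integrable_indicator_iff measurableSet_Icc).2
      ((intervalIntegrable_iff_integrableOn_Icc_of_le hx).1 hf)
  obtain ⟨M, hM⟩ := isCompact_Icc.exists_bound_of_continuousOn hw
  have bound_cutoff : ∀ y, ‖indicator (Icc 0 x) w y‖ ≤ M := fun y => by
    by_cases hy : y ∈ Icc 0 x
    · simpa only [indicator_of_mem hy] using hM y hy
    · simpa only [indicator_of_notMem hy, norm_zero] using
        (norm_nonneg _).trans (hM 0 (left_mem_Icc.2 hx))
  have assoc := convolution_lsmul_assoc (integrable_cutoff hk) (integrable_cutoff hr)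
    (hw.integrableOn_Icc.integrable_indicator measurableSet_Icc) bound_cutoff x
  have hx' : x ∈ Icc 0 x := right_mem_Icc.2 hx
  rw [← convolution_indicator_Icc _ _ hx', ← convolution_indicator_Icc _ _ hx']
  -- Only the values on `[0, x]` of the inner convolutions enter, where the cutoffs are invisible.
  refine Eq.trans ?_ (assoc.trans ?_) <;> simp only [convolution_def (x := x)] <;>
    congr 1 with s <;> by_cases hs : s ∈ Icc 0 x
  · rw [indicator_of_mem hs, convolution_indicator_Icc _ _ hs]
  · have hs' : x - s ∉ Icc 0 x := fun h => hs ⟨by linarith [h.2], by linarith [h.1]⟩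
    simp only [indicator_of_notMem hs', map_zero]
  · have hs' : x - s ∈ Icc 0 x := ⟨sub_nonneg.2 hs.2, sub_le_self x hs.1⟩
    rw [indicator_of_mem hs', convolution_indicator_Icc _ _ hs']
  · simp only [indicator_of_notMem hs, map_zero, zero_apply]

/-- `r` is the resolvent on `[0, X]` of the Volterra operator `v ↦ lam (k ⋆ v)`, normalised so that
`v = f + lam (k ⋆ v)` is solved by `v = f + lam (r ⋆ f)`. -/
def IsVolterraResolvent (lam : ℂ) (k r : ℝ → ℂ) (X : ℝ) : Prop :=
  EqOn (lam • causalConv r k) (r - k) (Ioc 0 X)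

theorem IsVolterraResolvent.smul_causalConv_causalConv {lam : ℂ} {X : ℝ}
    (h : IsVolterraResolvent lam k r X) (hX : 0 ≤ X) (hk : IntervalIntegrable k volume 0 X)
    (hr : IntervalIntegrable r volume 0 X) (hw : ContinuousOn w (Icc 0 X)) :
    lam • causalConv r (causalConv k w) X = causalConv r w X - causalConv k w X := by
  rw [← causalConv_assoc hX hr hk hw, ← causalConv_smul_left, causalConv_congr_left hX w h,
    causalConv_sub_left hX hr hk hw]

theorem IsVolterraResolvent.eq_of_eq_add_causalConv {lam : ℂ} {X : ℝ} {c : E} {g : ℝ → E}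
    (h : IsVolterraResolvent lam k r X) (hX : 0 ≤ X) (hk : IntervalIntegrable k volume 0 X)
    (hr : IntervalIntegrable r volume 0 X) (hv : ContinuousOn v (Icc 0 X))
    (hg : ContinuousOn g (Icc 0 X))
    (heq : ∀ y ∈ Icc 0 X, v y = c + lam • causalConv k v y + causalConv k g y) :
    v X = (1 + lam * ∫ s in (0 : ℝ)..X, r s) • c + causalConv r g X := by
  -- Absorbing the forcing term into `w` avoids any regularity of `k ⋆ g`.
  set w : ℝ → E := lam • v + g
  have hlv : ContinuousOn (lam • v) (Icc 0 X) := hv.const_smul lam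
  have hw : ContinuousOn w (Icc 0 X) := hlv.add hg
  have v_eq : ∀ y ∈ Icc 0 X, v y = c + causalConv k w y := fun y hy => by
    have hsub : Icc 0 y ⊆ Icc 0 X := Icc_subset_Icc_right hy.2
    rw [heq y hy, causalConv_add_right hy.1 (hk.mono_set ?_) (hlv.mono hsub) (hg.mono hsub),
      causalConv_smul_right, add_assoc]
    simpa only [uIcc_of_le hy.1, uIcc_of_le hX] using hsub
  have hkw : ContinuousOn (causalConv k w) (Icc 0 X) :=
    (hv.sub continuousOn_const).congr fun y hy => eq_sub_of_add_eq' (v_eq y hy).symm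
  have conv_w : causalConv r w X = lam • causalConv r v X + causalConv r g X := by
    rw [causalConv_add_right hX hr hlv hg, causalConv_smul_right]
  have conv_v :
      causalConv r v X = (∫ s in (0 : ℝ)..X, r s) • c + causalConv r (causalConv k w) X := by
    rw [causalConv_congr_right hX r (show EqOn v ((fun _ => c) + causalConv k w) _ from v_eq),
      causalConv_add_right hX hr continuousOn_const hkw, causalConv_const_right]
  calc v X = c + (causalConv r w X - lam • causalConv r (causalConv k w) X) := by
        rw [h.smul_causalConv_causalConv hX hk hr hw, sub_sub_cancel,
          v_eq X (right_mem_Icc.2 hX)]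
    _ = (1 + lam * ∫ s in (0 : ℝ)..X, r s) • c + causalConv r g X := by
        rw [conv_w, conv_v]
        module

end CausalConvolution

section MittagLeffler

theorem rpow_mul_exp_neg_le_Gamma {R s : ℝ} (hR : 0 ≤ R) (hs : 1 ≤ s) :
    R ^ (s - 1) * exp (-R) ≤ Real.Gamma s := by
  have hs0 : 0 < s := one_pos.trans_le hs
  have hint : IntegrableOn (fun x => exp (-x) * x ^ (s - 1)) (Ioi 0) :=
    Real.GammaIntegral_convergent hs0
  rw [Real.Gamma_eq_integral hs0, ← integral_exp_neg_Ioi, ← integral_const_mul]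
  calc ∫ x in Ioi R, R ^ (s - 1) * exp (-x)
      ≤ ∫ x in Ioi R, exp (-x) * x ^ (s - 1) := by
        refine setIntegral_mono_on ((integrableOn_exp_neg_Ioi R).const_mul _)
          (hint.mono_set (Ioi_subset_Ioi hR)) measurableSet_Ioi fun x hx => ?_
        rw [mul_comm]
        gcongr
        exact le_of_lt hx
    _ ≤ ∫ x in Ioi 0, exp (-x) * x ^ (s - 1) := by
        refine setIntegral_mono_set hint ?_ (Ioi_subset_Ioi hR).eventuallyLE
        filter_upwards [ae_restrict_mem measurableSet_Ioi] with x (hx : 0 < x)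
        positivity

variable {α : ℝ}

theorem summable_pow_div_Gamma (hα : 0 < α) (β : ℝ) (z : ℂ) :
    Summable fun k : ℕ => z ^ k / (Real.Gamma (k * α + β) : ℂ) := by
  obtain ⟨R, hzR, hR⟩ : ∃ R : ℝ, ‖z‖ < R ^ α ∧ 0 < R :=
    ((tendsto_rpow_atTop hα).eventually_gt_atTop ‖z‖ |>.and (eventually_gt_atTop 0)).exists
  have one_le_arg : ∀ᶠ k : ℕ in atTop, 1 ≤ k * α + β :=
    (tendsto_atTop_add_const_right _ β
      (tendsto_natCast_atTop_atTop.atTop_mul_const hα)).eventually_ge_atTop 1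
  refine .of_norm_bounded_eventually_nat
    (g := fun k => (R ^ (β - 1) * exp (-R))⁻¹ * (‖z‖ / R ^ α) ^ k)
    ((summable_geometric_of_lt_one (by positivity)
      ((div_lt_one (by positivity)).2 hzR)).mul_left _) ?_
  filter_upwards [one_le_arg] with k hk
  have hGamma := rpow_mul_exp_neg_le_Gamma hR.le hk
  have hsplit : R ^ (k * α + β - 1) = (R ^ α) ^ k * R ^ (β - 1) := by
    rw [← rpow_natCast, ← rpow_mul hR.le, ← rpow_add hR]
    ring_nf
  rw [norm_div, norm_pow, Complex.norm_real,
    Real.norm_of_nonneg (Real.Gamma_pos_of_pos (one_pos.trans_le hk)).le]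
  calc ‖z‖ ^ k / Real.Gamma (k * α + β)
      ≤ ‖z‖ ^ k / (R ^ (k * α + β - 1) * exp (-R)) := by gcongr
    _ = (R ^ (β - 1) * exp (-R))⁻¹ * (‖z‖ / R ^ α) ^ k := by
        rw [hsplit, div_pow]
        field_simp

theorem continuous_mittagLeffler (hα : 0 < α) (β : ℝ) : Continuous (mittagLeffler α β) := by
  refine continuous_iff_continuousAt.2 fun z => ContinuousOn.continuousAt
    (s := Metric.ball 0 (‖z‖ + 1)) ?_ (Metric.isOpen_ball.mem_nhds (by simp))
  refine continuousOn_tsum (fun k => by fun_prop)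
    (summable_pow_div_Gamma hα β (‖z‖ + 1 : ℝ)).norm fun k x hx => ?_
  rw [norm_div, norm_div, norm_pow, norm_pow, Complex.norm_of_nonneg (r := ‖z‖ + 1) (by positivity)]
  gcongr
  exact (mem_ball_zero_iff.1 hx).le

theorem mittagLeffler_eq_add (hα : 0 < α) (β : ℝ) (z : ℂ) :
    mittagLeffler α β z = 1 / (Real.Gamma β : ℂ) + z * mittagLeffler α (α + β) z := by
  rw [mittagLeffler, (summable_pow_div_Gamma hα β z).tsum_eq_zero_add, mittagLeffler,
    ← tsum_mul_left]
  congr 1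
  · simp
  · refine tsum_congr fun k => ?_
    rw [show ((k + 1 : ℕ) : ℝ) * α + β = k * α + (α + β) by push_cast; ring, pow_succ']
    ring

end MittagLeffler

section Kernels

/-- The Riemann–Liouville kernel `y^{β-1} / Γ(β)`, convolution with which is fractional integration
of order `β`. It is complex-valued so as to be convolved with `mlKernel`. -/
noncomputable def rlKernel (β y : ℝ) : ℂ := ((y ^ (β - 1) / Real.Gamma β : ℝ) : ℂ)

/-- The Mittag-Leffler kernel `y^{β-1} E_{α,β}(lam y^α) = ∑ₖ lam^k y^{kα+β-1} / Γ(kα+β)`. -/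
noncomputable def mlKernel (α β : ℝ) (lam : ℂ) (y : ℝ) : ℂ :=
  ((y ^ (β - 1) : ℝ) : ℂ) * mittagLeffler α β (lam * ((y ^ α : ℝ) : ℂ))

variable {α β γ y : ℝ}

theorem rlKernel_one (y : ℝ) : rlKernel 1 y = 1 := by simp [rlKernel]

theorem mlKernel_one (α : ℝ) (lam : ℂ) (y : ℝ) :
    mlKernel α 1 lam y = mittagLeffler α 1 (lam * ((y ^ α : ℝ) : ℂ)) := by simp [mlKernel]

theorem ofReal_norm_rlKernel (hβ : 0 < β) (hy : 0 ≤ y) : (‖rlKernel β y‖ : ℂ) = rlKernel β y := by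
  have := Real.Gamma_pos_of_pos hβ
  rw [rlKernel, Complex.norm_of_nonneg (by positivity)]

theorem rlKernel_ne_zero (hβ : 0 < β) (hy : 0 < y) : rlKernel β y ≠ 0 :=
  Complex.ofReal_ne_zero.2 (div_pos (rpow_pos_of_pos hy _) (Real.Gamma_pos_of_pos hβ)).ne'

theorem intervalIntegrable_rlKernel (hβ : 0 < β) (x y : ℝ) :
    IntervalIntegrable (rlKernel β) volume x y :=
  have h := (intervalIntegral.intervalIntegrable_rpow' (a := x) (b := y)
    (show -1 < β - 1 by linarith)).div_const (Real.Gamma β)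
  ⟨h.1.ofReal, h.2.ofReal⟩

theorem intervalIntegrable_mlKernel (hα : 0 < α) (hβ : 0 < β) (lam : ℂ) (x y : ℝ) :
    IntervalIntegrable (mlKernel α β lam) volume x y := by
  have hpow := intervalIntegral.intervalIntegrable_rpow' (a := x) (b := y)
    (show -1 < β - 1 by linarith)
  refine IntervalIntegrable.mul_continuousOn ⟨hpow.1.ofReal, hpow.2.ofReal⟩
    (Continuous.continuousOn ?_)
  exact (continuous_mittagLeffler hα β).comp (continuous_const.mul
    (Complex.continuous_ofReal.comp (continuous_rpow_const hα.le)))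

theorem hasSum_mlKernel (hα : 0 < α) (β : ℝ) (lam : ℂ) (hy : 0 < y) :
    HasSum (fun k : ℕ => lam ^ k * rlKernel (k * α + β) y) (mlKernel α β lam y) := by
  refine ((summable_pow_div_Gamma hα β (lam * ((y ^ α : ℝ) : ℂ))).hasSum.mul_left
    ((y ^ (β - 1) : ℝ) : ℂ)).congr_fun fun k => ?_
  rw [rlKernel, show (k : ℝ) * α + β - 1 = α * k + (β - 1) by ring, rpow_add hy,
    rpow_mul hy.le, rpow_natCast]
  push_cast
  ring

theorem mlKernel_eq_add (hα : 0 < α) (β : ℝ) (lam : ℂ) (hy : 0 < y) :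
    mlKernel α β lam y = rlKernel β y + lam * mlKernel α (α + β) lam y := by
  rw [mlKernel, mittagLeffler_eq_add hα, mlKernel, rlKernel,
    show α + β - 1 = α + (β - 1) by ring, rpow_add hy]
  push_cast
  ring

theorem causalConv_rlKernel_rlKernel (hβ : 0 < β) (hγ : 0 < γ) (hy : 0 < y) :
    causalConv (rlKernel β) (rlKernel γ) y = rlKernel (β + γ) y := by
  have hβ' : 0 < (β : ℂ).re := hβ
  have hγ' : 0 < (γ : ℂ).re := hγ
  have beta_eq : Complex.betaIntegral β γ =
      Complex.Gamma β * Complex.Gamma γ / Complex.Gamma (β + γ) := by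
    rw [Complex.Gamma_mul_Gamma_eq_betaIntegral hβ' hγ', mul_div_cancel_left₀]
    exact Complex.Gamma_ne_zero_of_re_pos (add_pos hβ' hγ')
  have hΓβ := Complex.Gamma_ne_zero_of_re_pos hβ'
  have hΓγ := Complex.Gamma_ne_zero_of_re_pos hγ'
  calc causalConv (rlKernel β) (rlKernel γ) y
      = ∫ s in (0 : ℝ)..y, ((s : ℂ) ^ ((β : ℂ) - 1) * ((y : ℂ) - s) ^ ((γ : ℂ) - 1)) /
          (Complex.Gamma β * Complex.Gamma γ) := by
        refine intervalIntegral.integral_congr fun s hs => ?_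
        rw [uIcc_of_le hy.le] at hs
        simp only [rlKernel, smul_eq_mul]
        push_cast [Complex.ofReal_cpow hs.1, Complex.ofReal_cpow (sub_nonneg.2 hs.2),
          ← Complex.Gamma_ofReal]
        ring
    _ = rlKernel (β + γ) y := by
        rw [intervalIntegral.integral_div, Complex.betaIntegral_scaled _ _ hy, beta_eq, rlKernel]
        push_cast [Complex.ofReal_cpow hy.le, ← Complex.Gamma_ofReal]
        field_simp

theorem intervalIntegrable_rlKernel_mul_rlKernel (hβ : 0 < β) (hγ : 0 < γ) (hy : 0 < y) :
    IntervalIntegrable (fun s => rlKernel β s * rlKernel γ (y - s)) volume 0 y :=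
  intervalIntegral.intervalIntegrable_of_integral_ne_zero <|
    (causalConv_rlKernel_rlKernel hβ hγ hy).trans_ne (rlKernel_ne_zero (add_pos hβ hγ) hy)

theorem ofReal_integral_norm_rlKernel_mul_rlKernel (hβ : 0 < β) (hγ : 0 < γ) (hy : 0 < y) :
    ((∫ s in (0 : ℝ)..y, ‖rlKernel β s * rlKernel γ (y - s)‖ : ℝ) : ℂ) = rlKernel (β + γ) y := by
  rw [← causalConv_rlKernel_rlKernel hβ hγ hy, ← intervalIntegral.integral_ofReal]
  refine intervalIntegral.integral_congr fun s hs => ?_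
  rw [uIcc_of_le hy.le] at hs
  simp only [norm_mul, Complex.ofReal_mul, ofReal_norm_rlKernel hβ hs.1,
    ofReal_norm_rlKernel hγ (sub_nonneg.2 hs.2), smul_eq_mul]

theorem causalConv_mlKernel_rlKernel (hα : 0 < α) (hβ : 0 < β) (hγ : 0 < γ) (hy : 0 < y)
    (lam : ℂ) :
    causalConv (mlKernel α β lam) (rlKernel γ) y = mlKernel α (β + γ) lam y := by
  have hpos : ∀ k : ℕ, 0 < k * α + β := fun k => by positivity
  set F : ℕ → ℝ → ℂ := fun k s => lam ^ k * (rlKernel (k * α + β) s * rlKernel γ (y - s))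
  have integrable_F : ∀ k, IntegrableOn (F k) (Ioc 0 y) := fun k =>
    ((intervalIntegrable_iff_integrableOn_Ioc_of_le hy.le).1
      (intervalIntegrable_rlKernel_mul_rlKernel (hpos k) hγ hy)).const_mul _
  have integral_F : ∀ k, ∫ s in Ioc 0 y, F k s = lam ^ k * rlKernel (k * α + (β + γ)) y :=
    fun k => by
      rw [integral_const_mul, ← intervalIntegral.integral_of_le hy.le, ← add_assoc,
        ← causalConv_rlKernel_rlKernel (hpos k) hγ hy]
      rfl
  have summable_norm_F : Summable fun k => ∫ s in Ioc 0 y, ‖F k s‖ := by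
    rw [← Complex.summable_ofReal]
    refine (hasSum_mlKernel hα (β + γ) ‖lam‖ hy).summable.congr fun k => ?_
    simp only [F, norm_mul (lam ^ k), norm_pow]
    rw [integral_const_mul, ← intervalIntegral.integral_of_le hy.le, Complex.ofReal_mul,
      ofReal_integral_norm_rlKernel_mul_rlKernel (hpos k) hγ hy, add_assoc, Complex.ofReal_pow]
  have tsum_F : ∀ s ∈ Ioc 0 y, ∑' k, F k s = mlKernel α β lam s * rlKernel γ (y - s) :=
    fun s hs => by
      simpa only [F, mul_assoc] using ((hasSum_mlKernel hα β lam hs.1).mul_right _).tsum_eq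
  calc causalConv (mlKernel α β lam) (rlKernel γ) y
      = ∫ s in Ioc 0 y, ∑' k, F k s := by
        rw [causalConv, intervalIntegral.integral_of_le hy.le]
        exact setIntegral_congr_fun measurableSet_Ioc fun s hs => (tsum_F s hs).symm
    _ = ∑' k : ℕ, lam ^ k * rlKernel (k * α + (β + γ)) y := by
        rw [← integral_tsum_of_summable_integral_norm integrable_F summable_norm_F]
        exact tsum_congr integral_F
    _ = mlKernel α (β + γ) lam y := (hasSum_mlKernel hα (β + γ) lam hy).tsum_eq

theorem isVolterraResolvent_mlKernel (hα : 0 < α) (lam : ℂ) (X : ℝ) :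
    IsVolterraResolvent lam (rlKernel α) (mlKernel α α lam) X := fun y hy => by
  rw [Pi.smul_apply, Pi.sub_apply, causalConv_mlKernel_rlKernel hα hα hα hy.1,
    mlKernel_eq_add hα α lam hy.1, smul_eq_mul, add_sub_cancel_left]

theorem one_add_mul_integral_mlKernel (hα : 0 < α) (hy : 0 ≤ y) (lam : ℂ) :
    1 + lam * ∫ s in (0 : ℝ)..y, mlKernel α α lam s =
      mittagLeffler α 1 (lam * ((y ^ α : ℝ) : ℂ)) := by
  rcases hy.eq_or_lt with rfl | hy
  · rw [mittagLeffler_eq_add hα]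
    simp [zero_rpow hα.ne']
  have integral_eq : ∫ s in (0 : ℝ)..y, mlKernel α α lam s = mlKernel α (α + 1) lam y := by
    rw [← causalConv_mlKernel_rlKernel hα hα one_pos hy lam]
    simp only [causalConv, rlKernel_one, smul_eq_mul, mul_one]
  rw [integral_eq, ← mlKernel_one, mlKernel_eq_add hα 1 lam hy, rlKernel_one]

end Kernels

section KatugampolaTime

/-- The time change `t ↦ (t^ρ - a^ρ) / ρ`, which carries Katugampola integrals based at `a` to
causal convolutions. -/
noncomputable def katugampolaTime (ρ a t : ℝ) : ℝ := (t ^ ρ - a ^ ρ) / ρ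

/-- The inverse of `katugampolaTime ρ a` on `[0, ∞)`. -/
noncomputable def katugampolaTimeInv (ρ a x : ℝ) : ℝ := (ρ * x + a ^ ρ) ^ ρ⁻¹

variable {ρ a t x : ℝ}

theorem katugampolaTime_self (ρ a : ℝ) : katugampolaTime ρ a a = 0 := by
  rw [katugampolaTime, sub_self, zero_div]

theorem katugampolaTime_sub_katugampolaTime (ρ a s t : ℝ) :
    katugampolaTime ρ a t - katugampolaTime ρ a s = katugampolaTime ρ s t := by
  rw [katugampolaTime, katugampolaTime, katugampolaTime, ← sub_div, sub_sub_sub_cancel_right]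

theorem katugampolaTime_nonneg (hρ : 0 < ρ) (ha : 0 ≤ a) (hat : a ≤ t) :
    0 ≤ katugampolaTime ρ a t :=
  div_nonneg (sub_nonneg.2 (rpow_le_rpow ha hat hρ.le)) hρ.le

theorem katugampolaTimeInv_katugampolaTime (hρ : ρ ≠ 0) (a : ℝ) (ht : 0 ≤ t) :
    katugampolaTimeInv ρ a (katugampolaTime ρ a t) = t := by
  rw [katugampolaTimeInv, katugampolaTime, mul_div_cancel₀ _ hρ, sub_add_cancel,
    rpow_rpow_inv ht hρ]

theorem katugampolaTime_katugampolaTimeInv (hρ : 0 < ρ) (ha : 0 ≤ a) (hx : 0 ≤ x) :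
    katugampolaTime ρ a (katugampolaTimeInv ρ a x) = x := by
  rw [katugampolaTime, katugampolaTimeInv, rpow_inv_rpow (by positivity) hρ.ne',
    add_sub_cancel_right, mul_div_cancel_left₀ _ hρ.ne']

theorem monotoneOn_katugampolaTimeInv (hρ : 0 < ρ) (ha : 0 ≤ a) :
    MonotoneOn (katugampolaTimeInv ρ a) (Ici 0) := fun x (hx : 0 ≤ x) y _ hxy => by
  unfold katugampolaTimeInv
  gcongr

theorem mapsTo_katugampolaTimeInv (hρ : 0 < ρ) (ha : 0 ≤ a) (hat : a ≤ t) :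
    MapsTo (katugampolaTimeInv ρ a) (Icc 0 (katugampolaTime ρ a t)) (Icc a t) := by
  have maps_zero : katugampolaTimeInv ρ a 0 = a := by
    simpa only [katugampolaTime_self] using katugampolaTimeInv_katugampolaTime hρ.ne' a ha
  have h := ((monotoneOn_katugampolaTimeInv hρ ha).mono Icc_subset_Ici_self).mapsTo_Icc
    (b := katugampolaTime ρ a t)
  rwa [maps_zero, katugampolaTimeInv_katugampolaTime hρ.ne' a (ha.trans hat)] at h

theorem continuousOn_comp_katugampolaTimeInv {E : Type*} [TopologicalSpace E] {u : ℝ → E}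
    (hρ : 0 < ρ) (ha : 0 ≤ a) (hat : a ≤ t) (hu : ContinuousOn u (Icc a t)) :
    ContinuousOn (u ∘ katugampolaTimeInv ρ a) (Icc 0 (katugampolaTime ρ a t)) :=
  hu.comp ((continuous_rpow_const (inv_nonneg.2 hρ.le)).comp (by fun_prop)).continuousOn
    (mapsTo_katugampolaTimeInv hρ ha hat)

theorem hasDerivAt_katugampolaTime (hρ : ρ ≠ 0) (a : ℝ) (ht : t ≠ 0) :
    HasDerivAt (katugampolaTime ρ a) (t ^ (ρ - 1)) t := by
  have h := ((Real.hasDerivAt_rpow_const (p := ρ) (.inl ht)).sub_const (a ^ ρ)).div_const ρ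
  rwa [mul_div_cancel_left₀ _ hρ] at h

theorem integral_rpow_smul_comp_katugampolaTime {E : Type*} [NormedAddCommGroup E]
    [NormedSpace ℝ E] (hρ : 0 < ρ) (ha : 0 ≤ a) (hat : a ≤ t) (F : ℝ → E) :
    ∫ s in a..t, s ^ (ρ - 1) • F (katugampolaTime ρ a s) =
      ∫ x in (0 : ℝ)..katugampolaTime ρ a t, F x := by
  have hpos : ∀ s ∈ Ioo (min a t) (max a t), 0 < s := fun s hs =>
    ha.trans_lt (by simpa only [min_eq_left hat] using hs.1)
  have hcont : Continuous (katugampolaTime ρ a) :=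
    ((continuous_rpow_const hρ.le).sub continuous_const).div_const ρ
  rw [← katugampolaTime_self ρ a]
  exact intervalIntegral.integral_deriv_smul_comp_of_deriv_nonneg hcont.continuousOn
    (fun s hs => hasDerivAt_katugampolaTime hρ.ne' a (hpos s hs).ne')
    (fun s hs => rpow_nonneg (hpos s hs).le _)

theorem integral_rpow_mul_kernel_eq_causalConv (hρ : 0 < ρ) (ha : 0 ≤ a) (hat : a ≤ t)
    (k u : ℝ → ℂ) :
    ∫ s in a..t, ((s ^ (ρ - 1) : ℝ) : ℂ) * (k (katugampolaTime ρ s t) * u s) =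
      causalConv k (u ∘ katugampolaTimeInv ρ a) (katugampolaTime ρ a t) := by
  set X := katugampolaTime ρ a t with hX
  calc ∫ s in a..t, ((s ^ (ρ - 1) : ℝ) : ℂ) * (k (katugampolaTime ρ s t) * u s)
      = ∫ s in a..t, s ^ (ρ - 1) • (k (X - katugampolaTime ρ a s) *
          u (katugampolaTimeInv ρ a (katugampolaTime ρ a s))) := by
        refine intervalIntegral.integral_congr fun s hs => ?_
        rw [uIcc_of_le hat] at hs
        simp only [Complex.real_smul, hX, katugampolaTime_sub_katugampolaTime,
          katugampolaTimeInv_katugampolaTime hρ.ne' a (ha.trans hs.1)]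
    _ = ∫ x in (0 : ℝ)..X, k (X - x) * u (katugampolaTimeInv ρ a x) :=
        integral_rpow_smul_comp_katugampolaTime hρ ha hat
          fun x => k (X - x) * u (katugampolaTimeInv ρ a x)
    _ = causalConv k (u ∘ katugampolaTimeInv ρ a) X := by
        have h := intervalIntegral.integral_comp_sub_left (a := 0) (b := X)
          (fun x => k (X - x) * u (katugampolaTimeInv ρ a x)) X
        simpa only [sub_sub_cancel, sub_self, sub_zero, causalConv, Function.comp_apply,
          smul_eq_mul] using h.symm

theorem katugampolaIntegralC_eq_causalConv {α : ℝ} (hρ : 0 < ρ) (ha : 0 ≤ a) (hat : a ≤ t)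
    (u : ℝ → ℂ) :
    katugampolaIntegralC α ρ a u t =
      causalConv (rlKernel α) (u ∘ katugampolaTimeInv ρ a) (katugampolaTime ρ a t) := by
  rw [← integral_rpow_mul_kernel_eq_causalConv hρ ha hat, katugampolaIntegralC,
    ← intervalIntegral.integral_const_mul]
  refine intervalIntegral.integral_congr fun s hs => ?_
  rw [uIcc_of_le hat] at hs
  have hst : 0 ≤ t ^ ρ - s ^ ρ := sub_nonneg.2 (rpow_le_rpow (ha.trans hs.1) hs.2 hρ.le)
  have kernel_eq : ((t ^ ρ - s ^ ρ) / ρ) ^ (α - 1) = ρ ^ (1 - α) / (t ^ ρ - s ^ ρ) ^ (1 - α) := by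
    rw [← neg_sub 1 α, rpow_neg (div_nonneg hst hρ.le), div_rpow hst hρ.le, inv_div]
  simp only [rlKernel, katugampolaTime, kernel_eq]
  push_cast
  ring

end KatugampolaTime

theorem integralEquation_solution_general {α ρ a t : ℝ} (hα : 0 < α) (hρ : 0 < ρ) (ha : 0 ≤ a)
    (hat : a ≤ t) {lam c : ℂ} {h u : ℝ → ℂ} (hh : ContinuousOn h (Icc a t))
    (hu : ContinuousOn u (Icc a t))
    (heq : ∀ s ∈ Icc a t, u s = c + lam * katugampolaIntegralC α ρ a u s
      + katugampolaIntegralC α ρ a h s) :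
    u t = c * mittagLeffler α 1 (lam * ((((t ^ ρ - a ^ ρ) / ρ) ^ α : ℝ) : ℂ))
      + ∫ s in a..t, ((((t ^ ρ - s ^ ρ) / ρ) ^ (α - 1) : ℝ) : ℂ)
          * mittagLeffler α α (lam * ((((t ^ ρ - s ^ ρ) / ρ) ^ α : ℝ) : ℂ))
          * ((s ^ (ρ - 1) : ℝ) : ℂ) * h s := by
  have hX : 0 ≤ katugampolaTime ρ a t := katugampolaTime_nonneg hρ ha hat
  have volterra_eq : ∀ x ∈ Icc 0 (katugampolaTime ρ a t), (u ∘ katugampolaTimeInv ρ a) x =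
      c + lam • causalConv (rlKernel α) (u ∘ katugampolaTimeInv ρ a) x
        + causalConv (rlKernel α) (h ∘ katugampolaTimeInv ρ a) x := fun x hx => by
    have hs := mapsTo_katugampolaTimeInv hρ ha hat hx
    rw [Function.comp_apply, heq _ hs, katugampolaIntegralC_eq_causalConv hρ ha hs.1,
      katugampolaIntegralC_eq_causalConv hρ ha hs.1,
      katugampolaTime_katugampolaTimeInv hρ ha hx.1, smul_eq_mul]
  have solution := (isVolterraResolvent_mlKernel hα lam _).eq_of_eq_add_causalConv hX
    (intervalIntegrable_rlKernel hα _ _) (intervalIntegrable_mlKernel hα hα lam _ _)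
    (continuousOn_comp_katugampolaTimeInv hρ ha hat hu)
    (continuousOn_comp_katugampolaTimeInv hρ ha hat hh) volterra_eq
  rw [Function.comp_apply, katugampolaTimeInv_katugampolaTime hρ.ne' a (ha.trans hat),
    one_add_mul_integral_mlKernel hα hX, smul_eq_mul, mul_comm _ c,
    ← integral_rpow_mul_kernel_eq_causalConv hρ ha hat] at solution
  rw [solution]
  simp only [mlKernel, katugampolaTime, mul_assoc, mul_left_comm]

/-- A continuous solution of the integral equation
`u(t) = c + λ I_{a+}^{α,ρ} u(t) + I_{a+}^{α,ρ} h(t)` is given by the explicit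
Mittag-Leffler variation-of-constants formula. -/
theorem integralEquation_solution (α ρ a : ℝ) (hα0 : 0 < α) (hα1 : α < 1)
    (hρ : 0 < ρ) (ha : 0 < a) (lam c : ℂ) (h u : ℝ → ℂ)
    (hh : ContinuousOn h (Set.Ici a)) (hu : ContinuousOn u (Set.Ici a))
    (heq : ∀ t ≥ a, u t = c + lam * katugampolaIntegralC α ρ a u t
      + katugampolaIntegralC α ρ a h t) :
    ∀ t ≥ a, u t = c * mittagLeffler α 1 (lam * ((((t ^ ρ - a ^ ρ) / ρ) ^ α : ℝ) : ℂ))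
      + ∫ s in a..t, ((((t ^ ρ - s ^ ρ) / ρ) ^ (α - 1) : ℝ) : ℂ)
          * mittagLeffler α α (lam * ((((t ^ ρ - s ^ ρ) / ρ) ^ α : ℝ) : ℂ))
          * ((s ^ (ρ - 1) : ℝ) : ℂ) * h s := fun _ ht =>
  integralEquation_solution_general hα0 hρ ha.le ht (hh.mono Icc_subset_Ici_self)
    (hu.mono Icc_subset_Ici_self) fun s hs => heq s hs.1
end

section
/- Let 0 < α < 1, ρ > 0, t₀ > 0, let λ be a complex number with απ/2 < |arg λ| ≤ π, let T > t₀, and let g : [t₀, T] → ℂ be continuous. Then lim_{t → ∞} ∫_{t₀}^{T} ((t^ρ - s^ρ)/ρ)^{α-1} E_{α,α}(λ ((t^ρ - s^ρ)/ρ)^α) s^{ρ-1} g(s) ds = 0. -/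
open Real Set MeasureTheory Filter

/-! Fourier inversion of the Gamma integral represents `1 / Γ(b)` as a Bromwich integral over a
vertical line `Re s = σ`. Summing over the Mittag-Leffler series, for `σ` large, represents
`E_{α,β}(μ)` by an integral whose only singularities are the solutions of `s ^ α = μ`. When
`|arg μ| > α * π / 2` no `s` with `Re s > 0` satisfies this, so the line can be moved to `Re s = 1`;
there the distance of `μ * s ^ (-α)` to `1` is comparable to `1 + |μ * s ^ (-α)|`, which gives
`E_{α,β}(μ) = O(|μ| ^ (-τ))` for `0 ≤ τ ≤ 1` with `α * τ < β`. Hence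
`x ^ (β - 1) * E_{α,β}(λ * x ^ α)` tends to `0` as `x → ∞`, and `(t ^ ρ - s ^ ρ) / ρ → ∞` uniformly
for `s` in a compact interval. -/

section

open Complex (I)
open scoped Topology FourierTransform

theorem norm_cpow_mul_exp_neg_mul {t : ℝ} (ht : 0 < t) (a r : ℂ) :
    ‖(t : ℂ) ^ a * Complex.exp (-(r * t))‖ = t ^ a.re * Real.exp (-r.re * t) := by
  rw [norm_mul, Complex.norm_cpow_eq_rpow_re_of_pos ht, Complex.norm_exp]
  simp

theorem integrableOn_cpow_mul_exp_neg_mul_Ioi {a r : ℂ} (ha : -1 < a.re) (hr : 0 < r.re) :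
    IntegrableOn (fun t : ℝ => (t : ℂ) ^ a * Complex.exp (-(r * t))) (Ioi 0) := by
  have hdom := integrableOn_rpow_mul_exp_neg_mul_rpow ha one_pos hr
  simp only [Real.rpow_one] at hdom
  refine hdom.mono' (by fun_prop) ?_
  filter_upwards [ae_restrict_mem measurableSet_Ioi] with t ht
  exact (norm_cpow_mul_exp_neg_mul ht a r).le

theorem differentiableOn_integral_cpow_mul_exp_neg_mul_Ioi {a : ℂ} (ha : -1 < a.re) :
    DifferentiableOn ℂ
      (fun r : ℂ => ∫ t : ℝ in Ioi 0, (t : ℂ) ^ a * Complex.exp (-(r * t))) {r | 0 < r.re} := by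
  intro r (hr : 0 < r.re)
  have hball : ∀ z ∈ Metric.ball r (r.re / 2), r.re / 2 ≤ z.re := fun z hz => by
    have h := (Complex.abs_re_le_norm (z - r)).trans (mem_ball_iff_norm.1 hz).le
    rw [Complex.sub_re] at h
    linarith [(abs_le.1 h).1]
  have hdom := integrableOn_rpow_mul_exp_neg_mul_rpow (s := a.re + 1) (by linarith) one_pos
    (half_pos hr)
  refine (hasDerivAt_integral_of_dominated_loc_of_deriv_le (μ := volume.restrict (Ioi 0))
    (F := fun z t => (t : ℂ) ^ a * Complex.exp (-(z * t)))
    (bound := fun t => t ^ (a.re + 1) * Real.exp (-(r.re / 2) * t ^ (1 : ℝ)))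
    (F' := fun z t => (t : ℂ) ^ a * (Complex.exp (-(z * t)) * -t))
    (Metric.ball_mem_nhds r (half_pos hr)) (Eventually.of_forall fun z => by fun_prop)
    (integrableOn_cpow_mul_exp_neg_mul_Ioi ha hr) (by fun_prop) ?_ hdom
    (ae_of_all _ fun t z _ => ?_)).2.differentiableAt.differentiableWithinAt
  · filter_upwards [ae_restrict_mem measurableSet_Ioi] with t (ht : 0 < t) z hz
    rw [← mul_assoc, norm_mul, norm_cpow_mul_exp_neg_mul ht, norm_neg, Complex.norm_of_nonneg ht.le,
      Real.rpow_add_one ht.ne', Real.rpow_one, mul_right_comm]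
    gcongr
    exact hball z hz
  · simpa using ((((hasDerivAt_id z).mul_const (t : ℂ)).neg).cexp).const_mul ((t : ℂ) ^ a)

theorem integral_cpow_mul_exp_neg_mul_Ioi_of_re_pos {a r : ℂ} (ha : 0 < a.re) (hr : 0 < r.re) :
    ∫ t : ℝ in Ioi 0, (t : ℂ) ^ (a - 1) * Complex.exp (-(r * t)) = r ^ (-a) * Complex.Gamma a := by
  have hopen : IsOpen {r : ℂ | 0 < r.re} := isOpen_lt continuous_const Complex.continuous_re
  have hleft := (differentiableOn_integral_cpow_mul_exp_neg_mul_Ioi (a := a - 1)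
    (by simpa using ha)).analyticOnNhd hopen
  have hright : AnalyticOnNhd ℂ (fun r : ℂ => r ^ (-a) * Complex.Gamma a) {r | 0 < r.re} :=
    DifferentiableOn.analyticOnNhd (fun z (hz : 0 < z.re) =>
      (differentiableAt_id.cpow_const (Or.inl hz)).mul_const _ |>.differentiableWithinAt) hopen
  refine hleft.eqOn_of_preconnected_of_frequently_eq hright
    (convex_halfSpace_re_gt 0).isPreconnected (show (1 : ℂ) ∈ {r : ℂ | 0 < r.re} by simp) ?_ hr
  have hpos : ∃ᶠ x : ℝ in 𝓝[≠] 1, 0 < x :=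
    ((lt_mem_nhds one_pos).filter_mono nhdsWithin_le_nhds).frequently
  have hcoe : Tendsto ((↑) : ℝ → ℂ) (𝓝[≠] 1) (𝓝[≠] 1) :=
    Complex.continuous_ofReal.continuousWithinAt.tendsto_nhdsWithin fun x hx => by simpa using hx
  refine hcoe.frequently (hpos.mono fun x hx => ?_)
  rw [Complex.integral_cpow_mul_exp_neg_mul_Ioi ha hx, one_div, Complex.inv_cpow _ _
    (by rw [Complex.arg_ofReal_of_nonneg hx.le]; exact Real.pi_pos.ne), Complex.cpow_neg]

theorem le_norm_verticalLine (σ y : ℝ) : σ ≤ ‖(σ + y * I : ℂ)‖ := by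
  simpa using Complex.re_le_norm (σ + y * I)

theorem integrable_norm_verticalLine_rpow {σ b : ℝ} (hσ : 0 < σ) (hb : 1 < b) :
    Integrable fun y : ℝ => ‖(σ + y * I : ℂ)‖ ^ (-b) := by
  have h := integrable_rpow_neg_one_add_norm_sq (E := ℝ) (μ := volume) (r := b) (by simpa using hb)
  refine ((h.comp_div hσ.ne').const_mul (σ ^ (-b))).congr (ae_of_all _ fun y => ?_)
  have hnorm : ‖(σ + y * I : ℂ)‖ = σ * (1 + ‖y / σ‖ ^ 2) ^ (1 / 2 : ℝ) := by
    rw [Complex.norm_add_mul_I, ← Real.sqrt_eq_rpow, Real.norm_eq_abs, sq_abs]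
    nth_rw 2 [← Real.sqrt_sq hσ.le]
    rw [← Real.sqrt_mul (sq_nonneg σ)]
    congr 1
    field_simp
  have hbase : 0 ≤ 1 + ‖y / σ‖ ^ 2 := by positivity
  simp only
  rw [hnorm, Real.mul_rpow hσ.le (by positivity), ← Real.rpow_mul hbase]
  ring_nf

theorem fourier_indicator_cpow_mul_exp_neg_mul {σ b : ℝ} (hσ : 0 < σ) (hb : 0 < b) (w : ℝ) :
    𝓕 ((Ioi 0).indicator fun t : ℝ => (t : ℂ) ^ (b - 1 : ℂ) * Complex.exp (-(σ * t))) w =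
      (σ + (2 * π * w : ℝ) * I) ^ (-b : ℂ) * Real.Gamma b := by
  have hre : 0 < (σ + (2 * π * w : ℝ) * I : ℂ).re := by simpa using hσ
  rw [← Complex.Gamma_ofReal, ← integral_cpow_mul_exp_neg_mul_Ioi_of_re_pos (by simpa using hb) hre,
    Real.fourier_eq', ← integral_indicator measurableSet_Ioi]
  congr 1 with t
  by_cases ht : t ∈ Ioi 0
  · simp only [indicator_of_mem ht, smul_eq_mul]
    rw [mul_left_comm, ← Complex.exp_add]
    congr 2
    simp only [RCLike.inner_apply, conj_trivial]
    push_cast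
    ring
  · simp only [indicator_of_notMem ht, smul_zero]

theorem integrable_fourier_indicator_cpow_mul_exp_neg_mul {σ b : ℝ} (hσ : 0 < σ) (hb : 1 < b) :
    Integrable (𝓕 ((Ioi 0).indicator fun t : ℝ =>
      (t : ℂ) ^ (b - 1 : ℂ) * Complex.exp (-(σ * t)))) := by
  simp_rw [funext (fourier_indicator_cpow_mul_exp_neg_mul hσ (one_pos.trans hb))]
  refine (((integrable_norm_verticalLine_rpow hσ hb).comp_mul_left' two_pi_pos.ne').mono'
    (Measurable.pow_const (by fun_prop) _).aestronglyMeasurable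
    (ae_of_all _ fun w => ?_)).mul_const _
  rw [← Complex.ofReal_neg, Complex.norm_cpow_real]

theorem integral_exp_mul_cpow_neg_verticalLine {σ b : ℝ} (hσ : 0 < σ) (hb : 1 < b) :
    ∫ y : ℝ, Complex.exp (σ + y * I) * (σ + y * I) ^ (-b : ℂ) = 2 * π / Real.Gamma b := by
  set f : ℝ → ℂ :=
    (Ioi 0).indicator fun t => (t : ℂ) ^ (b - 1 : ℂ) * Complex.exp (-(σ * t)) with hf
  have hfourier := fourier_indicator_cpow_mul_exp_neg_mul hσ (one_pos.trans hb)
  have hint : Integrable f := (integrable_indicator_iff measurableSet_Ioi).2 <|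
    integrableOn_cpow_mul_exp_neg_mul_Ioi (by simpa using one_pos.trans hb) (by simpa using hσ)
  have hfint : Integrable (𝓕 f) := integrable_fourier_indicator_cpow_mul_exp_neg_mul hσ hb
  have hcont : ContinuousAt f 1 := by
    have hmem : Ioi (0 : ℝ) ∈ 𝓝 1 := Ioi_mem_nhds one_pos
    refine ContinuousAt.congr ?_ (eventually_of_mem hmem fun t ht => (indicator_of_mem ht _).symm)
    have hcpow := Complex.continuousAt_ofReal_cpow_const 1 (b - 1 : ℂ) (Or.inr one_ne_zero)
    fun_prop
  have hinv := hint.fourierInv_fourier_eq hfint hcont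
  have hΓ : (Real.Gamma b : ℂ) ≠ 0 := mod_cast (Real.Gamma_pos_of_pos (one_pos.trans hb)).ne'
  have hf1 : f 1 = Complex.exp (-σ) := by simp [hf]
  rw [Real.fourierInv_eq', hf1] at hinv
  calc ∫ y : ℝ, Complex.exp (σ + y * I) * (σ + y * I) ^ (-b : ℂ)
      = 2 * π * ∫ w : ℝ, Complex.exp (σ + (2 * π * w : ℝ) * I) *
          (σ + (2 * π * w : ℝ) * I) ^ (-b : ℂ) := by
        rw [Measure.integral_comp_mul_left
          (fun y : ℝ => Complex.exp (σ + y * I) * (σ + y * I) ^ (-b : ℂ)),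
          abs_of_pos (inv_pos.2 two_pi_pos), Complex.real_smul,
          ← mul_assoc, Complex.ofReal_inv, Complex.ofReal_mul, Complex.ofReal_ofNat,
          mul_inv_cancel₀ (by simp), one_mul]
    _ = 2 * π * (Complex.exp σ / Real.Gamma b * Complex.exp (-σ)) := by
        rw [← hinv, ← integral_const_mul (Complex.exp σ / Real.Gamma b)]
        congr 2 with w
        rw [hf, hfourier, smul_eq_mul, Complex.exp_add]
        simp only [RCLike.inner_apply, conj_trivial, one_mul]
        field_simp
    _ = 2 * π / Real.Gamma b := by
        rw [div_mul_eq_mul_div, ← Complex.exp_add, add_neg_cancel, Complex.exp_zero, mul_one_div]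

/-- The sum `∑ k, (k * α + β) * q ^ k` of the arithmetico-geometric series, in the closed form
that continues it to all `q ≠ 1`. -/
noncomputable def arithGeomSum (α β : ℝ) (q : ℂ) : ℂ :=
  α * (q / (1 - q) ^ 2) + β * (1 - q)⁻¹

theorem hasSum_arithGeomSum (α β : ℝ) {q : ℂ} (hq : ‖q‖ < 1) :
    HasSum (fun k : ℕ => ((k * α + β : ℝ) : ℂ) * q ^ k) (arithGeomSum α β q) := by
  refine (((hasSum_coe_mul_geometric_of_norm_lt_one hq).mul_left (α : ℂ)).add
    ((hasSum_geometric_of_norm_lt_one hq).mul_left (β : ℂ))).congr_fun fun k => ?_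
  push_cast
  ring

/-- The integrand of a Bromwich integral for the Mittag-Leffler function `E_{α,β}(μ)`: it is
`exp s` times minus the derivative of the Laplace transform `s ^ (α - β) / (s ^ α - μ)` of
`x ^ (β - 1) * E_{α,β}(μ * x ^ α)`. Differentiating makes it absolutely integrable along vertical
lines for every `β > 0`. -/
noncomputable def bromwichKernel (α β : ℝ) (μ s : ℂ) : ℂ :=
  Complex.exp s * s ^ (-(β + 1 : ℝ) : ℂ) * arithGeomSum α β (μ * s ^ (-α : ℂ))

theorem norm_mul_cpow_neg (α : ℝ) (μ s : ℂ) : ‖μ * s ^ (-α : ℂ)‖ = ‖μ‖ * ‖s‖ ^ (-α) := by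
  rw [norm_mul, ← Complex.ofReal_neg, Complex.norm_cpow_real]

theorem norm_exp_mul_cpow_neg (b : ℝ) (s : ℂ) :
    ‖Complex.exp s * s ^ (-b : ℂ)‖ = Real.exp s.re * ‖s‖ ^ (-b) := by
  rw [norm_mul, Complex.norm_exp, ← Complex.ofReal_neg, Complex.norm_cpow_real]

theorem exp_mul_cpow_neg_mul_pow (α β : ℝ) (μ : ℂ) {s : ℂ} (hs : s ≠ 0) (k : ℕ) :
    Complex.exp s * s ^ (-(β + 1 : ℝ) : ℂ) * (μ * s ^ (-α : ℂ)) ^ k =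
      μ ^ k * (Complex.exp s * s ^ (-(k * α + β + 1 : ℝ) : ℂ)) := by
  have hexp : (-(k * α + β + 1 : ℝ) : ℂ) = -(β + 1 : ℝ) + k * -α := by push_cast; ring
  rw [mul_pow, ← Complex.cpow_nat_mul, hexp, Complex.cpow_add _ _ hs]
  ring

theorem hasSum_bromwichKernel {α β : ℝ} {μ s : ℂ} (hs : s ≠ 0) (hμ : ‖μ * s ^ (-α : ℂ)‖ < 1) :
    HasSum (fun k : ℕ => ((k * α + β : ℝ) : ℂ) * μ ^ k *
      (Complex.exp s * s ^ (-(k * α + β + 1 : ℝ) : ℂ))) (bromwichKernel α β μ s) := by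
  refine ((hasSum_arithGeomSum α β hμ).mul_left _).congr_fun fun k => ?_
  rw [mul_left_comm (Complex.exp s * _), exp_mul_cpow_neg_mul_pow α β μ hs, mul_assoc]

theorem mul_integral_exp_mul_cpow_neg_verticalLine {σ b : ℝ} (hσ : 0 < σ) (hb : 0 < b) :
    b * ∫ y : ℝ, Complex.exp (σ + y * I) * (σ + y * I) ^ (-(b + 1 : ℝ) : ℂ) =
      2 * π / Real.Gamma b := by
  rw [integral_exp_mul_cpow_neg_verticalLine hσ (by linarith), Real.Gamma_add_one hb.ne']
  have hb' : (b : ℂ) ≠ 0 := mod_cast hb.ne'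
  push_cast
  field_simp

theorem norm_mul_cpow_neg_le_verticalLine {α σ : ℝ} (hα : 0 ≤ α) (hσ : 0 < σ) (μ : ℂ) (y : ℝ) :
    ‖μ * (σ + y * I : ℂ) ^ (-α : ℂ)‖ ≤ ‖μ‖ * σ ^ (-α) := by
  rw [norm_mul_cpow_neg]
  gcongr ?_ * ?_
  exact Real.rpow_le_rpow_of_nonpos hσ (le_norm_verticalLine σ y) (neg_nonpos.2 hα)

theorem integral_bromwichKernel_of_norm_lt {α β σ : ℝ} {μ : ℂ} (hα : 0 ≤ α) (hβ : 0 < β)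
    (hσ : 0 < σ) (hμ : ‖μ‖ * σ ^ (-α) < 1) :
    ∫ y : ℝ, bromwichKernel α β μ (σ + y * I) = 2 * π * mittagLeffler α β μ := by
  have hs (y : ℝ) : (σ + y * I : ℂ) ≠ 0 := norm_pos_iff.1 (hσ.trans_le (le_norm_verticalLine σ y))
  have hre (y : ℝ) : (σ + y * I : ℂ).re = σ := by simp
  have hq := norm_mul_cpow_neg_le_verticalLine hα hσ μ
  set r := ‖μ‖ * σ ^ (-α)
  have hr0 : 0 ≤ r := by positivity
  have hr : Summable fun k : ℕ => ‖((k * α + β : ℝ) : ℂ) * (r : ℂ) ^ k‖ :=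
    (hasSum_arithGeomSum α β (by rwa [Complex.norm_of_nonneg hr0])).summable.norm
  let bound (k : ℕ) (y : ℝ) : ℝ :=
    Real.exp σ * ‖(σ + y * I : ℂ)‖ ^ (-(β + 1)) * ‖((k * α + β : ℝ) : ℂ) * (r : ℂ) ^ k‖
  have hsum := hasSum_integral_of_dominated_convergence (μ := volume) bound
    (F := fun (k : ℕ) (y : ℝ) => ((k * α + β : ℝ) : ℂ) * μ ^ k *
      (Complex.exp (σ + y * I) * (σ + y * I) ^ (-(k * α + β + 1 : ℝ) : ℂ)))
    (fun k => (Measurable.const_mul (Measurable.mul (by fun_prop)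
      (Measurable.pow_const (by fun_prop) _)) _).aestronglyMeasurable)
    (fun k => ae_of_all _ fun y => ?_) (ae_of_all _ fun y => hr.mul_left _) ?_
    (ae_of_all _ fun y => hasSum_bromwichKernel (hs y) ((hq y).trans_lt hμ))
  · rw [← hsum.tsum_eq, mittagLeffler, ← tsum_mul_left]
    refine tsum_congr fun k => ?_
    have hk : 0 < k * α + β := by positivity
    rw [integral_const_mul, mul_right_comm, mul_integral_exp_mul_cpow_neg_verticalLine hσ hk]
    ring
  · rw [mul_assoc, ← exp_mul_cpow_neg_mul_pow α β μ (hs y), mul_left_comm, norm_mul,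
      norm_exp_mul_cpow_neg, hre, norm_mul, norm_pow]
    simp only [bound, norm_mul, norm_pow, Complex.norm_of_nonneg hr0]
    gcongr
    simpa only [norm_mul] using hq y
  · simp only [bound, tsum_mul_left]
    exact ((integrable_norm_verticalLine_rpow hσ (by linarith)).const_mul _).mul_const _

theorem tendsto_intervalIntegral_mul_zero_of_tendstoUniformlyOn {ι A : Type*} [NormedRing A]
    [NormedAlgebra ℝ A] {l : Filter ι} {F : ι → ℝ → A} {h : ℝ → A} {a b : ℝ}
    (hF : TendstoUniformlyOn F 0 l (uIoc a b)) (hh : IntervalIntegrable h volume a b) :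
    Tendsto (fun i => ∫ s in a..b, F i s * h s) l (𝓝 0) := by
  refine Metric.tendsto_nhds.2 fun ε hε => ?_
  have hM : 0 < |∫ s in a..b, ‖h s‖| + 1 := by positivity
  filter_upwards [Metric.tendstoUniformlyOn_iff.1 hF _ (div_pos hε hM)] with i hi
  have hbound : ∀ s ∈ uIoc a b, ‖F i s * h s‖ ≤ ε / (|∫ s in a..b, ‖h s‖| + 1) * ‖h s‖ :=
    fun s hs => (norm_mul_le _ _).trans <| by
      gcongr
      simpa using (hi s hs).le
  calc dist (∫ s in a..b, F i s * h s) 0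
      ≤ |∫ s in a..b, ε / (|∫ s in a..b, ‖h s‖| + 1) * ‖h s‖| := by
        rw [dist_zero_right]
        exact intervalIntegral.norm_integral_le_abs_of_norm_le
          (ae_restrict_of_forall_mem measurableSet_uIoc hbound) (hh.norm.const_mul _)
    _ = ε / (|∫ s in a..b, ‖h s‖| + 1) * |∫ s in a..b, ‖h s‖| := by
        rw [intervalIntegral.integral_const_mul, abs_mul, abs_of_pos (div_pos hε hM)]
    _ < ε := by
        rw [div_mul_eq_mul_div, div_lt_iff₀ hM]
        gcongr
        exact lt_add_one _

theorem integral_verticalLine_eq_of_tendstoUniformlyOn {F : ℂ → ℂ} {a b : ℝ}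
    (hF : DifferentiableOn ℂ F (Complex.re ⁻¹' uIcc a b))
    (ha : Integrable fun y : ℝ => F (a + y * I)) (hb : Integrable fun y : ℝ => F (b + y * I))
    (hlim : TendstoUniformlyOn (fun (y : ℝ) (x : ℝ) => F (x + y * I)) 0 (cocompact ℝ)
      (uIcc a b)) :
    ∫ y : ℝ, F (a + y * I) = ∫ y : ℝ, F (b + y * I) := by
  have hhoriz : Tendsto (fun y : ℝ => ∫ x in a..b, F (x + y * I)) (cocompact ℝ) (𝓝 0) := by
    simpa using tendsto_intervalIntegral_mul_zero_of_tendstoUniformlyOn (h := fun _ => 1)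
      (hlim.mono uIoc_subset_uIcc) intervalIntegrable_const
  have hvert {x : ℝ} (hx : Integrable fun y : ℝ => F (x + y * I)) :=
    intervalIntegral_tendsto_integral hx tendsto_neg_atTop_atBot tendsto_id
  have hrect (R : ℝ) := Complex.integral_boundary_rect_eq_zero_of_differentiableOn F
    (a + (-R : ℝ) * I) (b + R * I) (hF.mono fun z hz => by simpa using hz.1)
  simp only [Complex.add_re, Complex.add_im, Complex.ofReal_re, Complex.ofReal_im, Complex.mul_re,
    Complex.mul_im, Complex.I_re, Complex.I_im, mul_zero, mul_one, sub_self, add_zero, zero_add]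
    at hrect
  have hlimit := (((hhoriz.comp (tendsto_neg_atTop_atBot.mono_right atBot_le_cocompact)).sub
    (hhoriz.comp atTop_le_cocompact)).add ((hvert hb).const_smul I)).sub ((hvert ha).const_smul I)
  have hzero := tendsto_nhds_unique hlimit (tendsto_const_nhds.congr fun R => (hrect R).symm)
  rw [sub_zero, zero_add, ← smul_sub, smul_eq_zero_iff_right Complex.I_ne_zero,
    sub_eq_zero] at hzero
  exact hzero.symm

theorem sin_le_sin_of_mem_Icc_pi_sub {x y : ℝ} (hx : 0 ≤ x) (hy : y ∈ Icc x (π - x)) :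
    Real.sin x ≤ Real.sin y := by
  have hxπ : x ≤ π - x := hy.1.trans hy.2
  simpa using strictConcaveOn_sin_Icc.concaveOn.min_le_of_mem_Icc
    (show x ∈ Icc 0 π from ⟨hx, by linarith⟩)
    (show π - x ∈ Icc 0 π from ⟨by linarith, by linarith⟩) hy

theorem abs_sin_half_mul_one_add_le_norm_one_sub (r φ : ℝ) :
    |Real.sin (φ / 2)| * (1 + r) ≤ ‖1 - r * Complex.exp (φ * I)‖ := by
  have hcos : Real.cos φ = 2 * Real.cos (φ / 2) ^ 2 - 1 := by rw [← Real.cos_two_mul]; ring_nf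
  have hnorm : ‖1 - r * Complex.exp (φ * I)‖ ^ 2 =
      (Real.sin (φ / 2) * (1 + r)) ^ 2 + (Real.cos (φ / 2) * (1 - r)) ^ 2 := by
    rw [Complex.sq_norm, Complex.normSq_apply]
    simp only [Complex.sub_re, Complex.sub_im, Complex.re_ofReal_mul, Complex.im_ofReal_mul,
      Complex.exp_ofReal_mul_I_re, Complex.exp_ofReal_mul_I_im, Complex.one_re, Complex.one_im]
    linear_combination r ^ 2 * Real.sin_sq_add_cos_sq φ - 2 * r * hcos
      - (1 + r) ^ 2 * Real.sin_sq_add_cos_sq (φ / 2)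
  calc |Real.sin (φ / 2)| * (1 + r) ≤ |Real.sin (φ / 2) * (1 + r)| := by
        rw [abs_mul]
        gcongr
        exact le_abs_self _
    _ ≤ ‖1 - r * Complex.exp (φ * I)‖ := by
        refine abs_le_of_sq_le_sq ?_ (norm_nonneg _)
        rw [hnorm]
        exact le_add_of_nonneg_right (sq_nonneg _)

theorem mul_cpow_neg_eq_norm_mul_exp (α : ℝ) (μ s : ℂ) :
    μ * s ^ (-α : ℂ) =
      ‖μ * s ^ (-α : ℂ)‖ * Complex.exp ((Complex.arg μ - α * Complex.arg s : ℝ) * I) := by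
  rw [norm_mul_cpow_neg]
  nth_rw 1 [← Complex.norm_mul_exp_arg_mul_I μ]
  rw [← Complex.ofReal_neg, Complex.cpow_ofReal, sub_eq_add_neg]
  push_cast
  rw [add_mul, Complex.exp_add, Complex.exp_mul_I (-_), mul_comm (Complex.arg s : ℂ), neg_mul]
  ring

theorem sin_mul_one_add_norm_le_norm_one_sub {α ψ : ℝ} (hα : 0 ≤ α) (hψ : α * π / 2 ≤ ψ) {μ s : ℂ}
    (hμ : ψ ≤ |Complex.arg μ|) (hs : 0 < s.re) :
    Real.sin ((ψ - α * π / 2) / 2) * (1 + ‖μ * s ^ (-α : ℂ)‖) ≤ ‖1 - μ * s ^ (-α : ℂ)‖ := by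
  set φ := Complex.arg μ - α * Complex.arg s with hφ
  have hargs : |α * Complex.arg s| ≤ α * (π / 2) := by
    rw [abs_mul, abs_of_nonneg hα]
    gcongr
    exact (Complex.abs_arg_lt_pi_div_two_iff.2 (Or.inl hs)).le
  have hφ_lower := abs_sub_abs_le_abs_sub (Complex.arg μ) (α * Complex.arg s)
  have hφ_upper := abs_sub (Complex.arg μ) (α * Complex.arg s)
  have hargμ := Complex.abs_arg_le_pi μ
  have hsin : Real.sin ((ψ - α * π / 2) / 2) ≤ |Real.sin (φ / 2)| := by
    have hhalf : |φ / 2| = |φ| / 2 := by rw [abs_div, abs_two]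
    rw [Real.abs_sin_eq_sin_abs_of_abs_le_pi (by rw [hhalf]; linarith), hhalf]
    exact sin_le_sin_of_mem_Icc_pi_sub (by linarith) ⟨by linarith, by linarith⟩
  calc _ ≤ |Real.sin (φ / 2)| * (1 + ‖μ * s ^ (-α : ℂ)‖) := by gcongr
    _ ≤ ‖1 - ‖μ * s ^ (-α : ℂ)‖ * Complex.exp (φ * I)‖ :=
        abs_sin_half_mul_one_add_le_norm_one_sub _ _
    _ = ‖1 - μ * s ^ (-α : ℂ)‖ := by rw [hφ, ← mul_cpow_neg_eq_norm_mul_exp α μ s]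

theorem norm_arithGeomSum_le {α β δ : ℝ} (hα : 0 ≤ α) (hβ : 0 ≤ β) (hδ : 0 < δ) {q : ℂ}
    (hq : δ * (1 + ‖q‖) ≤ ‖1 - q‖) :
    ‖arithGeomSum α β q‖ ≤ (α / δ ^ 2 + β / δ) * (1 + ‖q‖)⁻¹ := by
  calc ‖arithGeomSum α β q‖
      ≤ α * (‖q‖ / ‖1 - q‖ ^ 2) + β * ‖1 - q‖⁻¹ := by
        refine (norm_add_le _ _).trans_eq ?_
        simp only [norm_mul, norm_div, norm_pow, norm_inv, Complex.norm_of_nonneg hα,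
          Complex.norm_of_nonneg hβ]
    _ ≤ α * ((1 + ‖q‖) / (δ * (1 + ‖q‖)) ^ 2) + β * (δ * (1 + ‖q‖))⁻¹ := by
        gcongr
        exact le_add_of_nonneg_left one_pos.le
    _ = (α / δ ^ 2 + β / δ) * (1 + ‖q‖)⁻¹ := by field_simp

theorem inv_one_add_le_rpow_neg {x τ : ℝ} (hx : 0 < x) (hτ : τ ∈ Icc 0 1) :
    (1 + x)⁻¹ ≤ x ^ (-τ) := by
  rw [Real.rpow_neg hx.le]
  gcongr
  calc x ^ τ ≤ (1 + x) ^ τ := by gcongr; exacts [hτ.1, le_add_of_nonneg_left one_pos.le]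
    _ ≤ (1 + x) ^ (1 : ℝ) := by gcongr; exacts [le_add_of_nonneg_right hx.le, hτ.2]
    _ = 1 + x := Real.rpow_one _

theorem sin_half_sub_pos {α ψ : ℝ} (hα : 0 ≤ α) (hψ : α * π / 2 < ψ) (hψπ : ψ ≤ π) :
    0 < Real.sin ((ψ - α * π / 2) / 2) := by
  have hαπ : 0 ≤ α * π := by positivity
  exact Real.sin_pos_of_pos_of_lt_pi (by linarith) (by linarith [Real.pi_pos])

theorem exists_norm_bromwichKernel_le {α β ψ : ℝ} (hα : 0 ≤ α) (hβ : 0 ≤ β)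
    (hψ : α * π / 2 < ψ) (hψπ : ψ ≤ π) :
    ∃ C, 0 ≤ C ∧ ∀ τ ∈ Icc (0 : ℝ) 1, ∀ μ : ℂ, ψ ≤ |Complex.arg μ| → ∀ s : ℂ, 0 < s.re →
      ‖bromwichKernel α β μ s‖ ≤
        C * ‖μ‖ ^ (-τ) * Real.exp s.re * ‖s‖ ^ (-(β + 1 - α * τ)) := by
  have hδ := sin_half_sub_pos hα hψ hψπ
  set δ := Real.sin ((ψ - α * π / 2) / 2)
  refine ⟨α / δ ^ 2 + β / δ, by positivity, fun τ hτ μ hμ s hs => ?_⟩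
  have hs0 : 0 < ‖s‖ := norm_pos_iff.2 fun h => by simp [h] at hs
  have hμ0 : 0 < ‖μ‖ := norm_pos_iff.2 fun h => by
    rw [h, Complex.arg_zero, abs_zero] at hμ
    linarith [mul_nonneg hα Real.pi_pos.le]
  calc ‖bromwichKernel α β μ s‖
      = Real.exp s.re * ‖s‖ ^ (-(β + 1)) * ‖arithGeomSum α β (μ * s ^ (-α : ℂ))‖ := by
        rw [bromwichKernel, norm_mul, norm_exp_mul_cpow_neg]
    _ ≤ Real.exp s.re * ‖s‖ ^ (-(β + 1)) *
          ((α / δ ^ 2 + β / δ) * (‖μ‖ * ‖s‖ ^ (-α)) ^ (-τ)) := by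
        gcongr
        refine (norm_arithGeomSum_le hα hβ hδ
          (sin_mul_one_add_norm_le_norm_one_sub hα hψ.le hμ hs)).trans ?_
        rw [norm_mul_cpow_neg]
        gcongr
        exact inv_one_add_le_rpow_neg (by positivity) hτ
    _ = (α / δ ^ 2 + β / δ) * ‖μ‖ ^ (-τ) * Real.exp s.re * ‖s‖ ^ (-(β + 1 - α * τ)) := by
        rw [Real.mul_rpow hμ0.le (by positivity), ← Real.rpow_mul hs0.le,
          show -(β + 1 - α * τ) = -(β + 1) + -α * -τ by ring, Real.rpow_add hs0]
        ring

theorem differentiableOn_bromwichKernel {α : ℝ} (β : ℝ) {μ : ℂ} (hα : 0 ≤ α)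
    (hμ : α * π / 2 < |Complex.arg μ|) :
    DifferentiableOn ℂ (bromwichKernel α β μ) {s | 0 < s.re} := by
  intro s (hs : 0 < s.re)
  have hδ := sin_half_sub_pos hα hμ (Complex.abs_arg_le_pi μ)
  have hpole : 1 - μ * s ^ (-α : ℂ) ≠ 0 := norm_pos_iff.1 <|
    (by positivity : 0 < _ * (1 + ‖μ * s ^ (-α : ℂ)‖)).trans_le
      (sin_mul_one_add_norm_le_norm_one_sub hα hμ.le le_rfl hs)
  have hcpow (c : ℂ) : DifferentiableAt ℂ (fun s : ℂ => s ^ c) s :=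
    differentiableAt_id.cpow_const (Or.inl hs)
  refine DifferentiableAt.differentiableWithinAt ?_
  unfold bromwichKernel arithGeomSum
  fun_prop (disch := first | exact hpole | exact pow_ne_zero 2 hpole)

theorem tendstoUniformlyOn_bromwichKernel {α β a b : ℝ} {μ : ℂ} (hα : 0 ≤ α) (hβ : 0 < β)
    (hμ : α * π / 2 < |Complex.arg μ|) (ha : 0 < a) (hb : 0 < b) :
    TendstoUniformlyOn (fun (y : ℝ) (x : ℝ) => bromwichKernel α β μ (x + y * I)) 0
      (cocompact ℝ) (uIcc a b) := by
  obtain ⟨C, hC, hbound⟩ := exists_norm_bromwichKernel_le hα hβ.le hμ (Complex.abs_arg_le_pi μ)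
  have hlim : Tendsto (fun y : ℝ => C * Real.exp (max a b) * ‖y‖ ^ (-(β + 1))) (cocompact ℝ)
      (𝓝 0) := by
    simpa using ((tendsto_rpow_neg_atTop (by linarith : 0 < β + 1)).comp
      (tendsto_norm_cocompact_atTop (E := ℝ))).const_mul (C * Real.exp (max a b))
  refine SeminormedAddGroup.tendstoUniformlyOn_zero.2 fun ε hε => ?_
  filter_upwards [hlim.eventually_lt_const hε,
    (tendsto_norm_cocompact_atTop (E := ℝ)).eventually_gt_atTop 0] with y hy hy0 x hx
  have hx0 : 0 < x := (lt_min ha hb).trans_le hx.1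
  have him : ‖y‖ ≤ ‖(x + y * I : ℂ)‖ := by simpa using Complex.abs_im_le_norm (x + y * I)
  have hxab : x ≤ max a b := hx.2
  calc ‖bromwichKernel α β μ (x + y * I)‖
      ≤ C * Real.exp x * ‖(x + y * I : ℂ)‖ ^ (-(β + 1)) := by
        simpa using hbound 0 (by simp) μ le_rfl (x + y * I) (by simpa using hx0)
    _ ≤ C * Real.exp (max a b) * ‖y‖ ^ (-(β + 1)) := by
        gcongr C * Real.exp ?_ * ?_
        exact Real.rpow_le_rpow_of_nonpos hy0 him (by linarith)
    _ < ε := hy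

theorem measurable_bromwichKernel (α β : ℝ) (μ : ℂ) : Measurable (bromwichKernel α β μ) := by
  unfold bromwichKernel arithGeomSum
  fun_prop

theorem integrable_bromwichKernel_verticalLine {α β σ : ℝ} {μ : ℂ} (hα : 0 ≤ α) (hβ : 0 < β)
    (hμ : α * π / 2 < |Complex.arg μ|) (hσ : 0 < σ) :
    Integrable fun y : ℝ => bromwichKernel α β μ (σ + y * I) := by
  obtain ⟨C, -, hbound⟩ := exists_norm_bromwichKernel_le hα hβ.le hμ (Complex.abs_arg_le_pi μ)
  refine ((integrable_norm_verticalLine_rpow hσ (b := β + 1) (by linarith)).const_mul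
    (C * Real.exp σ)).mono'
    ((measurable_bromwichKernel α β μ).comp (by fun_prop)).aestronglyMeasurable
    (ae_of_all _ fun y => ?_)
  simpa using hbound 0 (by simp) μ le_rfl (σ + y * I) (by simpa using hσ)

theorem integral_bromwichKernel {α β σ : ℝ} {μ : ℂ} (hα : 0 < α) (hβ : 0 < β)
    (hμ : α * π / 2 < |Complex.arg μ|) (hσ : 0 < σ) :
    ∫ y : ℝ, bromwichKernel α β μ (σ + y * I) = 2 * π * mittagLeffler α β μ := by
  have hlim : Tendsto (fun R : ℝ => ‖μ‖ * R ^ (-α)) atTop (𝓝 0) := by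
    simpa using (tendsto_rpow_neg_atTop hα).const_mul ‖μ‖
  obtain ⟨R, hR, hR0⟩ := ((hlim.eventually_lt_const one_pos).and (eventually_gt_atTop 0)).exists
  rw [← integral_bromwichKernel_of_norm_lt hα.le hβ hR0 hR]
  exact integral_verticalLine_eq_of_tendstoUniformlyOn
    ((differentiableOn_bromwichKernel β hα.le hμ).mono fun s hs => (lt_min hσ hR0).trans_le hs.1)
    (integrable_bromwichKernel_verticalLine hα.le hβ hμ hσ)
    (integrable_bromwichKernel_verticalLine hα.le hβ hμ hR0)
    (tendstoUniformlyOn_bromwichKernel hα.le hβ hμ hσ hR0)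

theorem exists_norm_mittagLeffler_le {α β τ ψ : ℝ} (hα : 0 < α) (hβ : 0 < β)
    (hψ : α * π / 2 < ψ) (hψπ : ψ ≤ π) (hτ : τ ∈ Icc 0 1) (hατ : α * τ < β) :
    ∃ C, ∀ μ : ℂ, ψ ≤ |Complex.arg μ| → ‖mittagLeffler α β μ‖ ≤ C * ‖μ‖ ^ (-τ) := by
  obtain ⟨C, -, hbound⟩ := exists_norm_bromwichKernel_le hα.le hβ.le hψ hψπ
  set J := ∫ y : ℝ, ‖((1 : ℝ) + y * I : ℂ)‖ ^ (-(β + 1 - α * τ)) with hJ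
  refine ⟨(2 * π)⁻¹ * (C * Real.exp 1 * J), fun μ hμ => ?_⟩
  have hint := integral_bromwichKernel hα hβ (hψ.trans_le hμ) one_pos
  calc ‖mittagLeffler α β μ‖
      = (2 * π)⁻¹ * ‖∫ y : ℝ, bromwichKernel α β μ ((1 : ℝ) + y * I)‖ := by
        rw [hint, norm_mul, norm_mul, Complex.norm_ofNat, Complex.norm_of_nonneg Real.pi_pos.le,
          inv_mul_cancel_left₀ two_pi_pos.ne']
    _ ≤ (2 * π)⁻¹ * (C * ‖μ‖ ^ (-τ) * Real.exp 1 * J) := by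
        gcongr
        rw [hJ, ← integral_const_mul]
        refine norm_integral_le_of_norm_le
          ((integrable_norm_verticalLine_rpow one_pos (by linarith)).const_mul _)
          (ae_of_all _ fun y => ?_)
        simpa using hbound τ hτ μ hμ ((1 : ℝ) + y * I) (by simp)
    _ = (2 * π)⁻¹ * (C * Real.exp 1 * J) * ‖μ‖ ^ (-τ) := by ring

theorem tendsto_rpow_mul_mittagLeffler {α β : ℝ} {lam : ℂ} (hα : 0 < α) (hβ : 0 < β)
    (hβα : β < α + 1) (harg : α * π / 2 < |Complex.arg lam|) :
    Tendsto (fun x : ℝ => ((x ^ (β - 1) : ℝ) : ℂ) * mittagLeffler α β (lam * (x ^ α : ℝ)))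
      atTop (𝓝 0) := by
  -- At exponent `τ = c / α` the decay `x ^ (-c)` beats `x ^ (β - 1)`.
  obtain ⟨c, hc_lower, hc_upper⟩ : ∃ c, max 0 (β - 1) < c ∧ c < min α β :=
    exists_between <|
    max_lt (lt_min hα hβ) (lt_min (by linarith) (by linarith))
  obtain ⟨hc0, hβc⟩ := max_lt_iff.1 hc_lower
  obtain ⟨hcα, hcβ⟩ := lt_min_iff.1 hc_upper
  have hατ : α * (c / α) = c := mul_div_cancel₀ c hα.ne'
  obtain ⟨C, hC⟩ := exists_norm_mittagLeffler_le (τ := c / α) hα hβ harg (Complex.abs_arg_le_pi lam)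
    ⟨by positivity, (div_le_one hα).2 hcα.le⟩ (by rwa [hατ])
  have hlim : Tendsto (fun x : ℝ => C * ‖lam‖ ^ (-(c / α)) * x ^ (-(c - (β - 1)))) atTop (𝓝 0) := by
    simpa using (tendsto_rpow_neg_atTop (sub_pos.2 hβc)).const_mul (C * ‖lam‖ ^ (-(c / α)))
  refine squeeze_zero_norm' ?_ hlim
  filter_upwards [eventually_gt_atTop 0] with x hx
  have hxα : 0 < x ^ α := Real.rpow_pos_of_pos hx α
  have hargx : Complex.arg (lam * (x ^ α : ℝ)) = Complex.arg lam := by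
    rw [mul_comm, Complex.arg_real_mul _ hxα]
  calc ‖((x ^ (β - 1) : ℝ) : ℂ) * mittagLeffler α β (lam * (x ^ α : ℝ))‖
      ≤ x ^ (β - 1) * (C * ‖lam * (x ^ α : ℝ)‖ ^ (-(c / α))) := by
        rw [norm_mul, Complex.norm_of_nonneg (by positivity)]
        gcongr
        exact hC _ (by rw [hargx])
    _ = C * ‖lam‖ ^ (-(c / α)) * x ^ (-(c - (β - 1))) := by
        rw [norm_mul, Complex.norm_of_nonneg hxα.le, Real.mul_rpow (norm_nonneg _) hxα.le,
          ← Real.rpow_mul hx.le, mul_neg, hατ, neg_sub, sub_eq_add_neg (β - 1),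
          Real.rpow_add hx]
        ring

theorem tendstoUniformlyOn_comp_rpow_sub_rpow_div {E : Type*} [SeminormedAddGroup E] {K : ℝ → E}
    (hK : Tendsto K atTop (𝓝 0)) {ρ : ℝ} (hρ : 0 < ρ) (T : ℝ) :
    TendstoUniformlyOn (fun t s : ℝ => K ((t ^ ρ - s ^ ρ) / ρ)) 0 atTop (Icc 0 T) := by
  refine SeminormedAddGroup.tendstoUniformlyOn_zero.2 fun ε hε => ?_
  obtain ⟨X, hX⟩ := eventually_atTop.1 (hK.norm.eventually_lt_const (by rwa [norm_zero]))
  have hdiv : Tendsto (fun t : ℝ => (t ^ ρ - T ^ ρ) / ρ) atTop atTop :=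
    (tendsto_atTop_add_const_right _ _ (tendsto_rpow_atTop hρ)).atTop_div_const hρ
  filter_upwards [hdiv.eventually_ge_atTop X] with t ht s hs
  refine hX _ (ht.trans ?_)
  gcongr
  exacts [hs.1, hs.2]

end

theorem mittagLeffler_kernel_integral_tendsto_zero_general (α β ρ t₀ T : ℝ)
    (hα : 0 < α) (hβ : 0 < β) (hβα : β < α + 1) (hρ : 0 < ρ) (ht₀ : 0 ≤ t₀) (hT : 0 ≤ T)
    (lam : ℂ) (harg : α * Real.pi / 2 < |Complex.arg lam|) (g : ℝ → ℂ)
    (hg : IntervalIntegrable (fun s => ((s ^ (ρ - 1) : ℝ) : ℂ) * g s) volume t₀ T) :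
    Filter.Tendsto
      (fun t : ℝ => ∫ s in t₀..T,
        ((((t ^ ρ - s ^ ρ) / ρ) ^ (β - 1) : ℝ) : ℂ)
          * mittagLeffler α β (lam * ((((t ^ ρ - s ^ ρ) / ρ) ^ α : ℝ) : ℂ))
          * ((s ^ (ρ - 1) : ℝ) : ℂ) * g s)
      Filter.atTop (nhds 0) := by
  have hunif := tendstoUniformlyOn_comp_rpow_sub_rpow_div
    (tendsto_rpow_mul_mittagLeffler hα hβ hβα harg) hρ (max t₀ T)
  have hsub : uIoc t₀ T ⊆ Icc 0 (max t₀ T) := fun s hs => ⟨(le_min ht₀ hT).trans hs.1.le, hs.2⟩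
  simpa only [mul_assoc] using
    tendsto_intervalIntegral_mul_zero_of_tendstoUniformlyOn (hunif.mono hsub) hg

/-- The integral over a fixed compact interval `[t₀, T]` of the Mittag-Leffler kernel
against a continuous function tends to `0` as `t → ∞`. -/
theorem mittagLeffler_kernel_integral_tendsto_zero (α ρ t₀ T : ℝ)
    (hα0 : 0 < α) (hα1 : α < 1) (hρ : 0 < ρ) (ht₀ : 0 < t₀) (hT : t₀ < T) (lam : ℂ)
    (harg₁ : α * Real.pi / 2 < |Complex.arg lam|) (harg₂ : |Complex.arg lam| ≤ Real.pi)
    (g : ℝ → ℂ) (hg : ContinuousOn g (Set.Icc t₀ T)) :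
    Filter.Tendsto
      (fun t : ℝ => ∫ s in t₀..T,
        ((((t ^ ρ - s ^ ρ) / ρ) ^ (α - 1) : ℝ) : ℂ)
          * mittagLeffler α α (lam * ((((t ^ ρ - s ^ ρ) / ρ) ^ α : ℝ) : ℂ))
          * ((s ^ (ρ - 1) : ℝ) : ℂ) * g s)
      Filter.atTop (nhds 0) := by
  refine mittagLeffler_kernel_integral_tendsto_zero_general α α ρ t₀ T hα0 hα0 (lt_add_one α) hρ
    ht₀.le (ht₀.trans hT).le lam harg₁ g (ContinuousOn.intervalIntegrable_of_Icc hT.le ?_)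
  exact (Complex.continuous_ofReal.comp_continuousOn (continuousOn_id.rpow_const fun s hs =>
    Or.inl (ht₀.trans_le hs.1).ne')).mul hg
end

section
/- Let 0 < α < 1, ρ > 0, t₀ > 0. Let d = d₁ + ... + d_n with d_i ≥ 1, and let λ₁, ..., λ_n be complex numbers with |arg λ_i| > απ/2 for all i; set J_i = λ_i · Id_{d_i×d_i}. Let h : ℝ^d → ℝ^d be a locally Lipschitz function with h(0) = 0, and for r > 0 let ℓ_h(r) = sup_{x, y ∈ B(0, r)} ‖h(x) − h(y)‖ / ‖x − y‖. Write ℝ^d = ℝ^{d₁} × ... × ℝ^{d_n} and accordingly h = (h¹, ..., hⁿ). For x = (x¹, ..., xⁿ) ∈ ℝ^d define the Lyapunov–Perron operator F_x on the space C_∞([t₀, ∞), ℝ^d) of bounded continuous functions (with sup norm ‖·‖_∞) componentwise by (F_x ξ)^i(t) = E_α(((t^ρ − t₀^ρ)/ρ)^α J_i) x^i + ∫_{t₀}^t ((t^ρ − s^ρ)/ρ)^{α−1} E_{α,α}(((t^ρ − s^ρ)/ρ)^α J_i) s^{ρ−1} h^i(ξ(s)) ds. Then there exists a constant C(α, λ)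 > 0, depending only on α and λ = (λ₁, ..., λ_n), such that for all x ∈ ℝ^d and all ξ, ξ̂ ∈ C_∞([t₀, ∞), ℝ^d): ‖F_x ξ − F_x ξ̂‖_∞ ≤ C(α, λ) · ℓ_h( max(‖ξ‖_∞, ‖ξ̂‖_∞) ) · ‖ξ − ξ̂‖_∞. -/
open Real Set MeasureTheory

/-- The Lyapunov–Perron operator associated with the block-diagonal linear part
`J = diag(λ₁ Id, ..., λ_n Id)` and the nonlinearity `h`; on the `i`-th block (coordinates
indexed by `p` with `p.1 = i`) it is
`(F_x ξ)^i(t) = E_α(((t^ρ−t₀^ρ)/ρ)^α J_i) x^i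
  + ∫_{t₀}^t ((t^ρ−s^ρ)/ρ)^{α−1} E_{α,α}(((t^ρ−s^ρ)/ρ)^α J_i) s^{ρ−1} h^i(ξ(s)) ds`,
where, since `J_i = λᵢ·Id`, the matrix Mittag-Leffler functions act as the scalars
`E_α(λᵢ ((t^ρ−t₀^ρ)/ρ)^α)` and `E_{α,α}(λᵢ ((t^ρ−s^ρ)/ρ)^α)`. -/
noncomputable def lyapunovPerron (α ρ t₀ : ℝ) {n : ℕ} {d : Fin n → ℕ} (lam : Fin n → ℂ)
    (h : (((i : Fin n) × Fin (d i)) → ℂ) → (((i : Fin n) × Fin (d i)) → ℂ))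
    (x : ((i : Fin n) × Fin (d i)) → ℂ) (ξ : ℝ → ((i : Fin n) × Fin (d i)) → ℂ)
    (t : ℝ) (p : (i : Fin n) × Fin (d i)) : ℂ :=
  mittagLeffler α 1 (lam p.1 * ((((t ^ ρ - t₀ ^ ρ) / ρ) ^ α : ℝ) : ℂ)) * x p
    + ∫ s in t₀..t, ((((t ^ ρ - s ^ ρ) / ρ) ^ (α - 1) : ℝ) : ℂ)
        * mittagLeffler α α (lam p.1 * ((((t ^ ρ - s ^ ρ) / ρ) ^ α : ℝ) : ℂ))
        * ((s ^ (ρ - 1) : ℝ) : ℂ) * h (ξ s) p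

/-- Sup norm `‖ξ‖_∞ = sup_{t ≥ t₀} ‖ξ(t)‖` on `C_∞([t₀,∞), E)`. -/
noncomputable def supNorm {E : Type*} [NormedAddCommGroup E] (t₀ : ℝ) (ξ : ℝ → E) : ℝ :=
  ⨆ t : Set.Ici t₀, ‖ξ t.1‖

/-- `ℓ_h(r) = sup_{x,y ∈ B(0,r)} ‖h(x) − h(y)‖ / ‖x − y‖`. -/
noncomputable def lipQuot {E : Type*} [NormedAddCommGroup E] (h : E → E) (r : ℝ) : ℝ :=
  ⨆ q : { q : E × E // ‖q.1‖ ≤ r ∧ ‖q.2‖ ≤ r }, ‖h q.1.1 - h q.1.2‖ / ‖q.1.1 - q.1.2‖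

/-!
The kernel `κ u = u ^ (α - 1) * E_{α,α}(lam * u ^ α)` is integrable on `(0, ∞)`. Indeed
`u ^ 2 * κ u` is the inverse Laplace transform of the second derivative of `(s ^ α - lam)⁻¹`:
on a vertical line far to the right this is the Mittag-Leffler series, inverted term by term.
The sector condition keeps `s ^ α` away from `lam` for `0 < re s`, so this second derivative is
`O(|s| ^ (-b))` on the whole right half-plane whenever `|b - 2| ≤ α`. If also `1 < b`, moving the
Bromwich line to `re s = u⁻¹` gives `‖κ u‖ ≤ K * u ^ (b - 3)`. Taking `b > 2` near `0` and `b < 2`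
near `∞` gives integrability. The substitution `u = (t ^ ρ - s ^ ρ) / ρ` turns `s ^ (ρ - 1) ds`
into `du`, so the `L¹` norm of `κ` bounds the integral operator uniformly in `t`, `ρ` and `t₀`.
-/

section LaplaceTransform

variable {E : Type*} [NormedAddCommGroup E] [NormedSpace ℂ E]

/-- The one-sided Laplace transform of `f`, defined at `s` as an integral over `(0, ∞)`; it has the
junk value `0` where that integral diverges. -/
noncomputable def laplaceTransform (f : ℝ → E) (s : ℂ) : E :=
  ∫ t in Ioi (0 : ℝ), Complex.exp (-(s * t)) • f t

/-- The Bromwich integral `(2πi)⁻¹ ∫ e^{su} F(s) ds` over the line `Re s = σ`, which inverts the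
Laplace transform. The line is parametrized by `s = σ + iy`, which absorbs the factor `i`. -/
noncomputable def bromwich (F : ℂ → E) (σ u : ℝ) : E :=
  (2 * π)⁻¹ • ∫ y : ℝ, Complex.exp ((σ + y * Complex.I) * u) • F (σ + y * Complex.I)

lemma fourier_indicator_exp_smul (f : ℝ → E) (σ y : ℝ) :
    FourierTransform.fourier ((Ioi 0).indicator fun t => rexp (-(σ * t)) • f t) y
      = laplaceTransform f (σ + (2 * π * y : ℝ) * Complex.I) := by
  rw [Real.fourier_real_eq_integral_exp_smul, laplaceTransform,
    ← integral_indicator measurableSet_Ioi]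
  congr with t
  by_cases ht : t ∈ Ioi (0 : ℝ)
  · rw [indicator_of_mem ht, indicator_of_mem ht, ← Complex.coe_smul, smul_smul,
      Complex.ofReal_exp, ← Complex.exp_add]
    congr 2
    push_cast
    ring
  · simp only [indicator_of_notMem ht, smul_zero]

lemma bromwich_laplaceTransform [CompleteSpace E] {f : ℝ → E} {σ u : ℝ} (hu : 0 < u)
    (hf : IntegrableOn (fun t => rexp (-(σ * t)) • f t) (Ioi 0))
    (hF : Complex.VerticalIntegrable (laplaceTransform f) σ) (hfu : ContinuousAt f u) :
    bromwich (laplaceTransform f) σ u = f u := by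
  set g : ℝ → E := (Ioi 0).indicator fun t => rexp (-(σ * t)) • f t
  have hg : Integrable g := hf.integrable_indicator measurableSet_Ioi
  have hFg : Integrable (FourierTransform.fourier g) := by
    rw [funext (fourier_indicator_exp_smul f σ)]
    exact Integrable.comp_mul_left' hF two_pi_pos.ne'
  have hgu : g =ᶠ[nhds u] fun t => rexp (-(σ * t)) • f t :=
    Filter.eventuallyEq_of_mem (Ioi_mem_nhds hu) fun t ht => indicator_of_mem ht _
  have hgc : ContinuousAt g u :=
    (ContinuousAt.smul (f := fun t => rexp (-(σ * t))) (by fun_prop) hfu).congr hgu.symm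
  have hscale := Measure.integral_comp_mul_left (fun y : ℝ =>
    Complex.exp ((σ + y * Complex.I) * u) • laplaceTransform f (σ + y * Complex.I)) (2 * π)
  rw [abs_of_pos (by positivity)] at hscale
  calc bromwich (laplaceTransform f) σ u
      = ∫ y : ℝ, rexp (σ * u) •
          Complex.exp (↑(2 * π * inner ℝ y u) * Complex.I) • FourierTransform.fourier g y := by
        rw [bromwich, ← hscale]
        congr with y
        rw [fourier_indicator_exp_smul, ← Complex.coe_smul, smul_smul, Complex.ofReal_exp,
          ← Complex.exp_add]
        congr 2
        simp only [RCLike.inner_apply, conj_trivial]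
        push_cast
        ring
    _ = rexp (σ * u) • g u := by
        rw [integral_smul, ← Real.fourierInv_eq', hg.fourierInv_fourier_eq hFg hgc]
    _ = f u := by
        rw [hgu.self_of_nhds, smul_smul, ← Real.exp_add, add_neg_cancel, Real.exp_zero, one_smul]

lemma laplaceTransform_exp_smul (f : ℝ → E) (a : ℝ) (s : ℂ) :
    laplaceTransform (fun t => rexp (-(a * t)) • f t) s = laplaceTransform f (s + a) := by
  unfold laplaceTransform
  congr with t
  dsimp only
  rw [← Complex.coe_smul, smul_smul, Complex.ofReal_exp, ← Complex.exp_add]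
  congr 2
  push_cast
  ring

lemma differentiableAt_laplaceTransform_of_integrableOn {f : ℝ → E} (hf : IntegrableOn f (Ioi 0))
    {s : ℂ} (hs : 0 < s.re) : DifferentiableAt ℂ (laplaceTransform f) s := by
  obtain ⟨b, hb, hbs⟩ := exists_between hs
  have hmeas : ∀ z : ℂ, AEStronglyMeasurable (fun t : ℝ => Complex.exp (-(z * t)) • f t)
      (volume.restrict (Ioi 0)) := fun z =>
    (Continuous.aestronglyMeasurable (by fun_prop)).smul hf.aestronglyMeasurable
  have hint : IntegrableOn (fun t : ℝ => Complex.exp (-(s * t)) • f t) (Ioi 0) := by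
    refine Integrable.mono hf (hmeas s)
      ((ae_restrict_mem measurableSet_Ioi).mono fun t (ht : 0 < t) => ?_)
    rw [norm_smul, Complex.norm_exp]
    refine mul_le_of_le_one_left (norm_nonneg _) (Real.exp_le_one_iff.2 ?_)
    simpa using (mul_pos hs ht).le
  have hbound : ∀ t ∈ Ioi (0 : ℝ), ∀ z ∈ {z : ℂ | b < z.re},
      ‖(Complex.exp (-(z * t)) * -t) • f t‖ ≤ b⁻¹ * ‖f t‖ := by
    intro t (ht : 0 < t) z (hz : b < z.re)
    rw [norm_smul, norm_mul, norm_neg, Complex.norm_exp, Complex.norm_of_nonneg ht.le]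
    gcongr
    have hle := Real.add_one_le_exp (b * t)
    rw [← one_div, le_div_iff₀ hb]
    calc rexp (-(z * t)).re * t * b = rexp (-(z.re * t)) * (b * t) := by simp; ring
      _ ≤ rexp (-(b * t)) * rexp (b * t) := by gcongr; linarith
      _ = 1 := by rw [← Real.exp_add, neg_add_cancel, Real.exp_zero]
  have hderiv : ∀ t : ℝ, ∀ z : ℂ, HasDerivAt (fun z : ℂ => Complex.exp (-(z * t)) • f t)
      ((Complex.exp (-(z * t)) * -t) • f t) z := fun t z =>
    (((hasDerivAt_mul_const (t : ℂ)).neg).cexp).smul_const (f t)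
  exact (hasDerivAt_integral_of_dominated_loc_of_deriv_le
    ((isOpen_lt continuous_const Complex.continuous_re).mem_nhds hbs) (.of_forall hmeas) hint
    ((Continuous.aestronglyMeasurable (by fun_prop)).smul hf.aestronglyMeasurable)
    ((ae_restrict_mem measurableSet_Ioi).mono hbound) (hf.norm.const_mul _)
    (.of_forall fun t z _ => hderiv t z)).2.differentiableAt

lemma differentiableAt_laplaceTransform {f : ℝ → E} {a : ℝ}
    (hf : IntegrableOn (fun t => rexp (-(a * t)) • f t) (Ioi 0)) {s : ℂ} (hs : a < s.re) :
    DifferentiableAt ℂ (laplaceTransform f) s := by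
  have hshift : laplaceTransform f
      = fun z => laplaceTransform (fun t => rexp (-(a * t)) • f t) (z - a) := by
    funext z
    rw [laplaceTransform_exp_smul, sub_add_cancel]
  rw [hshift]
  exact (differentiableAt_laplaceTransform_of_integrableOn hf (by simpa using hs)).comp s
    (by fun_prop)

end LaplaceTransform

lemma differentiableOn_cpow_re_pos (c : ℂ) :
    DifferentiableOn ℂ (fun s : ℂ => s ^ c) {s | 0 < s.re} := fun _ hs =>
  (differentiableAt_id.cpow_const (.inl hs)).differentiableWithinAt

lemma integrableOn_exp_smul_rpow {w σ : ℝ} (hw : 0 < w) (hσ : 0 < σ) :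
    IntegrableOn (fun t : ℝ => rexp (-(σ * t)) • ((t ^ (w - 1) : ℝ) : ℂ)) (Ioi 0) := by
  have h := integrableOn_rpow_mul_exp_neg_mul_rpow (p := 1) (s := w - 1) (by linarith) one_pos hσ
  refine (h.ofReal (𝕜 := ℂ)).congr (.of_forall fun t => ?_)
  simp [mul_comm]

lemma laplaceTransform_rpow {w : ℝ} (hw : 0 < w) {s : ℂ} (hs : 0 < s.re) :
    laplaceTransform (fun t => ((t ^ (w - 1) : ℝ) : ℂ)) s = Real.Gamma w * s ^ (-(w : ℂ)) := by
  have hopen : IsOpen {z : ℂ | 0 < z.re} := isOpen_lt continuous_const Complex.continuous_re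
  have hL : DifferentiableOn ℂ (laplaceTransform fun t => ((t ^ (w - 1) : ℝ) : ℂ))
      {z | 0 < z.re} := fun z (hz : 0 < z.re) => by
    obtain ⟨a, ha, haz⟩ := exists_between hz
    exact (differentiableAt_laplaceTransform (integrableOn_exp_smul_rpow hw ha)
      haz).differentiableWithinAt
  have hR : DifferentiableOn ℂ (fun z : ℂ => Real.Gamma w * z ^ (-(w : ℂ))) {z | 0 < z.re} :=
    (differentiableOn_cpow_re_pos _).const_mul _
  have hreal : ∀ r : ℝ, 0 < r → laplaceTransform (fun t => ((t ^ (w - 1) : ℝ) : ℂ)) r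
      = Real.Gamma w * (r : ℂ) ^ (-(w : ℂ)) := fun r hr => by
    have h := Real.integral_rpow_mul_exp_neg_mul_Ioi hw hr
    rw [one_div, Real.inv_rpow hr.le, ← Real.rpow_neg hr.le, mul_comm] at h
    rw [← Complex.ofReal_neg, ← Complex.ofReal_cpow hr.le, ← Complex.ofReal_mul, ← h,
      ← integral_complex_ofReal, laplaceTransform]
    congr with t
    push_cast
    rw [smul_eq_mul, mul_comm]
  have hofReal : Filter.Tendsto (fun r : ℝ => (r : ℂ)) (nhdsWithin 1 {1}ᶜ)
      (nhdsWithin 1 {1}ᶜ) :=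
    Complex.continuous_ofReal.continuousWithinAt.tendsto_nhdsWithin fun r hr => by simpa using hr
  refine (hL.analyticOnNhd hopen).eqOn_of_preconnected_of_frequently_eq (hR.analyticOnNhd hopen)
    (convex_halfSpace_re_gt 0).isPreconnected (z₀ := 1) (by simp) ?_ hs
  refine hofReal.frequently (Filter.Eventually.frequently ?_)
  filter_upwards [nhdsWithin_le_nhds (lt_mem_nhds one_pos)] with r hr using hreal r hr

lemma norm_add_mul_I_eq {σ : ℝ} (hσ : 0 < σ) (y : ℝ) :
    ‖(σ : ℂ) + y * Complex.I‖ = σ * ‖1 + (y / σ : ℝ) * Complex.I‖ := by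
  rw [← Complex.norm_of_nonneg hσ.le, ← norm_mul, Complex.norm_of_nonneg hσ.le]
  congr 1
  have : (σ : ℂ) ≠ 0 := by exact_mod_cast hσ.ne'
  push_cast
  field_simp

lemma integrable_norm_one_add_mul_I_rpow {b : ℝ} (hb : 1 < b) :
    Integrable fun y : ℝ => ‖1 + y * Complex.I‖ ^ (-b) := by
  refine (integrable_rpow_neg_one_add_norm_sq (E := ℝ) (μ := volume) (r := b)
    (by simpa using hb)).congr (.of_forall fun y => ?_)
  have hnorm : ‖1 + y * Complex.I‖ = √(1 + y ^ 2) := by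
    simpa using Complex.norm_add_mul_I 1 y
  simp only [hnorm, Real.norm_eq_abs, sq_abs, Real.sqrt_eq_rpow]
  rw [← Real.rpow_mul (by positivity)]
  ring_nf

lemma norm_add_mul_I_rpow_eq {σ : ℝ} (hσ : 0 < σ) (b y : ℝ) :
    ‖(σ : ℂ) + y * Complex.I‖ ^ (-b) = σ ^ (-b) * ‖1 + (y / σ : ℝ) * Complex.I‖ ^ (-b) := by
  rw [norm_add_mul_I_eq hσ, Real.mul_rpow hσ.le (norm_nonneg _)]

lemma verticalIntegrable_norm_rpow {b σ : ℝ} (hb : 1 < b) (hσ : 0 < σ) :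
    Complex.VerticalIntegrable (fun s => ‖s‖ ^ (-b)) σ := by
  simp only [Complex.VerticalIntegrable, norm_add_mul_I_rpow_eq hσ]
  exact ((integrable_norm_one_add_mul_I_rpow hb).comp_div hσ.ne').const_mul _

lemma integral_norm_add_mul_I_rpow (b : ℝ) {σ : ℝ} (hσ : 0 < σ) :
    ∫ y : ℝ, ‖(σ : ℂ) + y * Complex.I‖ ^ (-b)
      = σ ^ (1 - b) * ∫ y : ℝ, ‖1 + y * Complex.I‖ ^ (-b) := by
  simp only [norm_add_mul_I_rpow_eq hσ]
  rw [integral_const_mul, Measure.integral_comp_div (fun y : ℝ => ‖1 + y * Complex.I‖ ^ (-b)),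
    abs_of_pos hσ, smul_eq_mul, ← mul_assoc, ← Real.rpow_add_one hσ.ne', neg_add_eq_sub]

section RightHalfPlane

variable {E : Type*} [NormedAddCommGroup E]

lemma continuous_comp_add_mul_I {F : ℂ → E} (hF : ContinuousOn F {s | 0 < s.re}) {σ : ℝ}
    (hσ : 0 < σ) : Continuous fun y : ℝ => F (σ + y * Complex.I) :=
  hF.comp_continuous (by fun_prop) fun y => by simpa using hσ

lemma verticalIntegrable_of_norm_le {F : ℂ → E} {C b σ : ℝ} (hF : ContinuousOn F {s | 0 < s.re})
    (hle : ∀ s : ℂ, s.re = σ → ‖F s‖ ≤ C * ‖s‖ ^ (-b)) (hb : 1 < b) (hσ : 0 < σ) :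
    Complex.VerticalIntegrable F σ :=
  ((verticalIntegrable_norm_rpow hb hσ).const_mul C).mono'
    (continuous_comp_add_mul_I hF hσ).aestronglyMeasurable
    (.of_forall fun y => hle _ (by simp))

lemma norm_cexp_add_mul_I_mul (σ u y : ℝ) :
    ‖Complex.exp ((σ + y * Complex.I) * u)‖ = rexp (σ * u) := by
  simp [Complex.norm_exp]

lemma norm_bromwich_le [NormedSpace ℂ E] {F : ℂ → E} {C b σ : ℝ}
    (hle : ∀ s : ℂ, s.re = σ → ‖F s‖ ≤ C * ‖s‖ ^ (-b)) (hb : 1 < b) (hσ : 0 < σ) (u : ℝ) :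
    ‖bromwich F σ u‖ ≤ (2 * π)⁻¹ *
      (rexp (σ * u) * C * (σ ^ (1 - b) * ∫ y : ℝ, ‖1 + y * Complex.I‖ ^ (-b))) := by
  rw [bromwich, norm_smul, Real.norm_of_nonneg (by positivity), ← integral_norm_add_mul_I_rpow b hσ,
    ← integral_const_mul]
  gcongr
  refine norm_integral_le_of_norm_le ((verticalIntegrable_norm_rpow hb hσ).const_mul _)
    (.of_forall fun y => ?_)
  rw [norm_smul, norm_cexp_add_mul_I_mul, mul_assoc]
  gcongr
  exact hle _ (by simp)

lemma integral_verticalLine_eq [NormedSpace ℂ E] {H : ℂ → E} {σ₁ σ₂ : ℝ} {g : ℝ → ℝ}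
    (hH : DifferentiableOn ℂ H (Complex.re ⁻¹' uIcc σ₁ σ₂))
    (hg : Filter.Tendsto g Filter.atTop (nhds 0))
    (hle : ∀ s : ℂ, s.re ∈ uIcc σ₁ σ₂ → s.im ≠ 0 → ‖H s‖ ≤ g |s.im|)
    (h₁ : Complex.VerticalIntegrable H σ₁) (h₂ : Complex.VerticalIntegrable H σ₂) :
    ∫ y : ℝ, H (σ₁ + y * Complex.I) = ∫ y : ℝ, H (σ₂ + y * Complex.I) := by
  have hhor : ∀ ε : ℝ, |ε| = 1 → Filter.Tendsto
      (fun T : ℝ => ∫ x in σ₁..σ₂, H (x + (ε * T : ℝ) * Complex.I)) Filter.atTop (nhds 0) := by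
    intro ε hε
    refine squeeze_zero_norm' ?_ (by simpa using hg.mul_const |σ₂ - σ₁|)
    filter_upwards [Filter.eventually_gt_atTop 0] with T hT
    refine intervalIntegral.norm_integral_le_of_norm_le_const fun x hx => ?_
    have hε0 : ε ≠ 0 := abs_pos.1 (hε ▸ one_pos)
    have h := hle (x + (ε * T : ℝ) * Complex.I) (by simpa using uIoc_subset_uIcc hx)
      (by simpa using ⟨hε0, hT.ne'⟩)
    simpa [abs_mul, hε, abs_of_pos hT] using h
  have hrect : ∀ T : ℝ, (∫ x in σ₁..σ₂, H (x + (-1 * T : ℝ) * Complex.I))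
      - (∫ x in σ₁..σ₂, H (x + (1 * T : ℝ) * Complex.I))
      + Complex.I • (∫ y in (-T)..T, H (σ₂ + y * Complex.I))
      - Complex.I • (∫ y in (-T)..T, H (σ₁ + y * Complex.I)) = 0 := by
    intro T
    rw [neg_one_mul, one_mul]
    exact Complex.integral_boundary_rect_eq_zero_of_differentiableOn H ⟨σ₁, -T⟩ ⟨σ₂, T⟩
      (hH.mono fun s hs => (Complex.mem_reProdIm.1 hs).1)
  have hver : ∀ σ : ℝ, Complex.VerticalIntegrable H σ → Filter.Tendsto
      (fun T : ℝ => Complex.I • ∫ y in (-T)..T, H (σ + y * Complex.I)) Filter.atTop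
      (nhds (Complex.I • ∫ y : ℝ, H (σ + y * Complex.I))) := fun σ hσ =>
    (intervalIntegral_tendsto_integral hσ Filter.tendsto_neg_atTop_atBot
      Filter.tendsto_id).const_smul Complex.I
  have hlim := tendsto_nhds_unique
    ((((hhor (-1) (by simp)).sub (hhor 1 (by simp))).add (hver σ₂ h₂)).sub (hver σ₁ h₁))
    ((Filter.tendsto_congr hrect).2 tendsto_const_nhds)
  simp only [sub_zero, zero_add, ← smul_sub, smul_eq_zero, Complex.I_ne_zero, false_or,
    sub_eq_zero] at hlim
  exact hlim.symm

lemma verticalIntegrable_cexp_smul [NormedSpace ℂ E] {F : ℂ → E} {σ : ℝ}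
    (hF : Complex.VerticalIntegrable F σ) (u : ℝ) :
    Complex.VerticalIntegrable (fun s => Complex.exp (s * u) • F s) σ :=
  hF.bdd_smul (rexp (σ * u)) (Continuous.aestronglyMeasurable (by fun_prop))
    (.of_forall fun y => (norm_cexp_add_mul_I_mul σ u y).le)

lemma bromwich_const_smul [NormedSpace ℂ E] (c : ℂ) (F : ℂ → E) (σ u : ℝ) :
    bromwich (fun s => c • F s) σ u = c • bromwich F σ u := by
  simp only [bromwich, smul_comm _ c, integral_smul]

lemma hasSum_bromwich [NormedSpace ℂ E] [CompleteSpace E] {ι : Type*} [Countable ι]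
    {F : ι → ℂ → E} {G : ℂ → E} {m : ι → ℝ} {b σ : ℝ}
    (hF : ∀ i, ContinuousOn (F i) {s | 0 < s.re})
    (hle : ∀ i, ∀ s : ℂ, s.re = σ → ‖F i s‖ ≤ m i * ‖s‖ ^ (-b)) (hm : Summable m) (hb : 1 < b)
    (hσ : 0 < σ) (hG : ∀ s : ℂ, s.re = σ → HasSum (fun i => F i s) (G s)) (u : ℝ) :
    HasSum (fun i => bromwich (F i) σ u) (bromwich G σ u) := by
  have hint : ∀ i, Complex.VerticalIntegrable (fun s => Complex.exp (s * u) • F i s) σ := fun i =>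
    verticalIntegrable_cexp_smul (verticalIntegrable_of_norm_le (hF i) (hle i) hb hσ) u
  have hnorm : ∀ i, ∫ y : ℝ, ‖Complex.exp ((σ + y * Complex.I) * u) • F i (σ + y * Complex.I)‖
      ≤ m i * (rexp (σ * u) * ∫ y : ℝ, ‖(σ : ℂ) + y * Complex.I‖ ^ (-b)) := fun i => by
    rw [← integral_const_mul, ← integral_const_mul]
    refine integral_mono (hint i).norm
      (((verticalIntegrable_norm_rpow hb hσ).const_mul _).const_mul _) fun y => ?_
    dsimp only
    rw [norm_smul, norm_cexp_add_mul_I_mul, mul_left_comm]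
    gcongr
    exact hle i _ (by simp)
  have hsum := hasSum_integral_of_summable_integral_norm hint
    (.of_nonneg_of_le (fun i => integral_nonneg fun y => norm_nonneg _) hnorm (hm.mul_right _))
  have htsum : ∀ y : ℝ, ∑' i, Complex.exp ((σ + y * Complex.I) * u) • F i (σ + y * Complex.I)
      = Complex.exp ((σ + y * Complex.I) * u) • G (σ + y * Complex.I) := fun y =>
    ((hG _ (by simp)).const_smul _).tsum_eq
  simp only [htsum] at hsum
  exact hsum.const_smul _

lemma continuous_bromwich [NormedSpace ℂ E] {F : ℂ → E} {σ : ℝ}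
    (hF : Complex.VerticalIntegrable F σ) : Continuous (bromwich F σ) := by
  have hfactor : bromwich F σ = fun u : ℝ => (2 * π)⁻¹ • Complex.exp (σ * u) •
      ∫ y : ℝ, Complex.exp (y * Complex.I * u) • F (σ + y * Complex.I) := by
    funext u
    simp only [bromwich, ← integral_smul, smul_smul, ← Complex.exp_add, add_mul]
  rw [hfactor]
  refine continuous_const.smul (Continuous.smul (by fun_prop) (continuous_of_dominated
    (fun u => (Continuous.aestronglyMeasurable (by fun_prop)).smul hF.aestronglyMeasurable)
    (fun u => .of_forall fun y => ?_) hF.norm (.of_forall fun y => by fun_prop)))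
  simp [norm_smul, Complex.norm_exp]

lemma bromwich_eq_bromwich [NormedSpace ℂ E] {F : ℂ → E} {C b σ₁ σ₂ : ℝ}
    (hF : DifferentiableOn ℂ F {s | 0 < s.re})
    (hle : ∀ s : ℂ, 0 < s.re → ‖F s‖ ≤ C * ‖s‖ ^ (-b)) (hb : 1 < b) (hσ₁ : 0 < σ₁) (hσ₂ : 0 < σ₂)
    (u : ℝ) : bromwich F σ₁ u = bromwich F σ₂ u := by
  have hC : 0 ≤ C := by simpa using (norm_nonneg _).trans (hle 1 (by simp))
  have hre : ∀ s : ℂ, s.re ∈ uIcc σ₁ σ₂ → 0 < s.re := fun s hs => (lt_min hσ₁ hσ₂).trans_le hs.1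
  have hint : ∀ σ : ℝ, 0 < σ →
      Complex.VerticalIntegrable (fun s => Complex.exp (s * u) • F s) σ := fun σ hσ =>
    verticalIntegrable_cexp_smul (verticalIntegrable_of_norm_le hF.continuousOn
      (fun s hs => hle s (hs ▸ hσ)) hb hσ) u
  have hg : Filter.Tendsto (fun T : ℝ => rexp (max σ₁ σ₂ * |u|) * C * T ^ (-b)) Filter.atTop
      (nhds 0) := by
    simpa using (tendsto_rpow_neg_atTop (one_pos.trans hb)).const_mul (rexp (max σ₁ σ₂ * |u|) * C)
  unfold bromwich
  congr 1
  refine integral_verticalLine_eq (H := fun s => Complex.exp (s * u) • F s)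
    (DifferentiableOn.smul (by fun_prop) (hF.mono hre)) hg (fun s hs him => ?_)
    (hint σ₁ hσ₁) (hint σ₂ hσ₂)
  have hexp : ‖Complex.exp (s * u)‖ ≤ rexp (max σ₁ σ₂ * |u|) := by
    rw [Complex.norm_exp, Complex.re_mul_ofReal]
    refine Real.exp_le_exp.2 ?_
    calc s.re * u ≤ s.re * |u| := mul_le_mul_of_nonneg_left (le_abs_self u) (hre s hs).le
      _ ≤ max σ₁ σ₂ * |u| := by gcongr; exact hs.2
  calc ‖Complex.exp (s * u) • F s‖ ≤ rexp (max σ₁ σ₂ * |u|) * (C * ‖s‖ ^ (-b)) := by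
        rw [norm_smul]
        gcongr
        exact hle s (hre s hs)
    _ ≤ rexp (max σ₁ σ₂ * |u|) * C * |s.im| ^ (-b) := by
        rw [mul_assoc]
        gcongr ?_ * (?_ * ?_)
        exact Real.rpow_le_rpow_of_nonpos (abs_pos.2 him) (Complex.abs_im_le_norm s) (by linarith)

lemma exists_norm_bromwich_le [NormedSpace ℂ E] {F : ℂ → E} {C b : ℝ}
    (hF : DifferentiableOn ℂ F {s | 0 < s.re})
    (hle : ∀ s : ℂ, 0 < s.re → ‖F s‖ ≤ C * ‖s‖ ^ (-b)) (hb : 1 < b) :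
    ∃ K, ∀ σ > 0, ∀ u > 0, ‖bromwich F σ u‖ ≤ K * u ^ (b - 1) := by
  refine ⟨(2 * π)⁻¹ * (rexp 1 * C * ∫ y : ℝ, ‖1 + y * Complex.I‖ ^ (-b)), fun σ hσ u hu => ?_⟩
  rw [bromwich_eq_bromwich hF hle hb hσ (inv_pos.2 hu)]
  refine (norm_bromwich_le (fun s hs => hle s (hs ▸ inv_pos.2 hu)) hb (inv_pos.2 hu) u).trans_eq ?_
  rw [inv_mul_cancel₀ hu.ne', Real.inv_rpow hu.le, ← Real.rpow_neg hu.le, neg_sub]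
  ring

end RightHalfPlane

lemma bromwich_cpow_neg {w σ u : ℝ} (hw : 1 < w) (hσ : 0 < σ) (hu : 0 < u) :
    bromwich (fun s => s ^ (-(w : ℂ))) σ u = ((u ^ (w - 1) / Real.Gamma w : ℝ) : ℂ) := by
  have hw0 : 0 < w := one_pos.trans hw
  have hΓ : (Real.Gamma w : ℂ) ≠ 0 := by exact_mod_cast (Real.Gamma_pos_of_pos hw0).ne'
  have hlaplace : ∀ y : ℝ, laplaceTransform (fun t => ((t ^ (w - 1) : ℝ) : ℂ))
      (σ + y * Complex.I) = Real.Gamma w * (σ + y * Complex.I) ^ (-(w : ℂ)) := fun y =>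
    laplaceTransform_rpow hw0 (by simpa using hσ)
  have hint : Complex.VerticalIntegrable (fun s : ℂ => s ^ (-(w : ℂ))) σ :=
    verticalIntegrable_of_norm_le (C := 1) (differentiableOn_cpow_re_pos _).continuousOn
      (fun s _ => by rw [← Complex.ofReal_neg, Complex.norm_cpow_real, one_mul]) hw hσ
  have hinv := bromwich_laplaceTransform hu (integrableOn_exp_smul_rpow hw0 hσ)
    ((hint.const_mul (Real.Gamma w : ℂ)).congr (.of_forall fun y => (hlaplace y).symm))
    (Complex.continuous_ofReal.continuousAt.comp (Real.continuousAt_rpow_const u _ (.inl hu.ne')))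
  rw [Complex.ofReal_div, eq_div_iff hΓ, ← hinv]
  simp only [bromwich, hlaplace, smul_eq_mul, Complex.real_smul, mul_left_comm _ (Gamma w : ℂ),
    integral_const_mul]
  ring

lemma norm_cpow_mul_cos_le_re {α : ℝ} (hα0 : 0 ≤ α) (hα2 : α ≤ 2) {s : ℂ} (hs : 0 < s.re) :
    ‖s ^ (α : ℂ)‖ * cos (α * π / 2) ≤ (s ^ (α : ℂ)).re := by
  have harg : |Complex.arg s| ≤ π / 2 := Complex.abs_arg_le_pi_div_two_iff.2 hs.le
  rw [Complex.norm_cpow_real, Complex.cpow_ofReal_re, ← Real.cos_abs (Complex.arg s * α), abs_mul,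
    abs_of_nonneg hα0]
  gcongr
  refine Real.cos_le_cos_of_nonneg_of_le_pi (by positivity) ?_ ?_
  · nlinarith [Real.pi_pos]
  · nlinarith

lemma re_lt_norm_mul_cos {θ : ℝ} (hθ : 0 ≤ θ) {z : ℂ} (hz : θ < |Complex.arg z|) :
    z.re < ‖z‖ * cos θ := by
  have hz0 : 0 < ‖z‖ := norm_pos_iff.2 fun h => by simp [h, hθ.not_gt] at hz
  rw [← Complex.norm_mul_cos_arg, ← Real.cos_abs (Complex.arg z)]
  gcongr
  exact Real.cos_lt_cos_of_nonneg_of_le_pi hθ (Complex.abs_arg_le_pi z) hz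

lemma exists_mul_one_add_norm_le_norm_sub {E : Type*} [SeminormedAddCommGroup E] {S : Set E}
    (hS : IsClosed S) {a : E} (ha : a ∉ S) : ∃ c > 0, ∀ z ∈ S, c * (1 + ‖z‖) ≤ ‖z - a‖ := by
  obtain ⟨r, hr, hball⟩ := Metric.isOpen_iff.1 hS.isOpen_compl a ha
  refine ⟨r / (1 + ‖a‖ + r), by positivity, fun z hz => ?_⟩
  have hdist : r ≤ ‖z - a‖ := by
    rw [← dist_eq_norm]
    exact not_lt.1 fun h => hball h hz
  have htri : ‖z‖ ≤ ‖z - a‖ + ‖a‖ := norm_le_norm_sub_add z a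
  rw [div_mul_eq_mul_div, div_le_iff₀ (by positivity)]
  nlinarith [norm_nonneg a]

lemma exists_mul_one_add_rpow_le_norm_cpow_sub {α : ℝ} (hα : 0 ≤ α) {lam : ℂ}
    (hlam : α * π / 2 < |Complex.arg lam|) :
    ∃ c > 0, ∀ s : ℂ, 0 < s.re → c * (1 + ‖s‖ ^ α) ≤ ‖s ^ (α : ℂ) - lam‖ := by
  have hα2 : α ≤ 2 := by nlinarith [Complex.abs_arg_le_pi lam, Real.pi_pos]
  have hclosed : IsClosed {z : ℂ | ‖z‖ * cos (α * π / 2) ≤ z.re} :=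
    isClosed_le (by fun_prop) Complex.continuous_re
  obtain ⟨c, hc, hle⟩ := exists_mul_one_add_norm_le_norm_sub hclosed
    (not_le.2 (re_lt_norm_mul_cos (by positivity) hlam))
  refine ⟨c, hc, fun s hs => ?_⟩
  simpa only [Complex.norm_cpow_real] using hle _ (norm_cpow_mul_cos_le_re hα hα2 hs)

/-- The kernel `u ^ (α - 1) * E_{α,α}(lam * u ^ α)`, whose Laplace transform is
`s ↦ (s ^ α - lam)⁻¹`. -/
noncomputable def mittagLefflerKernel (α : ℝ) (lam : ℂ) (u : ℝ) : ℂ :=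
  ((u ^ (α - 1) : ℝ) : ℂ) * mittagLeffler α α (lam * ((u ^ α : ℝ) : ℂ))

/-- The second derivative of `s ↦ (s ^ α - lam)⁻¹`, that is, the Laplace transform of
`u ^ 2 * mittagLefflerKernel α lam u`. -/
noncomputable def resolventDerivTwo (α : ℝ) (lam s : ℂ) : ℂ :=
  s ^ ((α - 2 : ℝ) : ℂ) * (2 * α ^ 2 * s ^ (α : ℂ) / (s ^ (α : ℂ) - lam) ^ 3
    + α * (1 - α) / (s ^ (α : ℂ) - lam) ^ 2)

lemma rpow_le_one_add_rpow_sq {x a e : ℝ} (hx : 0 ≤ x) (he : 0 ≤ e) (hea : e ≤ 2 * a) :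
    x ^ e ≤ (1 + x ^ a) ^ 2 := by
  have hxa : 0 ≤ x ^ a := by positivity
  rcases le_total x 1 with h | h
  · exact (Real.rpow_le_one hx h he).trans (by nlinarith)
  · calc x ^ e ≤ x ^ (a * (2 : ℕ)) := Real.rpow_le_rpow_of_exponent_le h (by push_cast; linarith)
      _ = (x ^ a) ^ 2 := Real.rpow_mul_natCast hx a 2
      _ ≤ (1 + x ^ a) ^ 2 := by gcongr; linarith

lemma norm_div_cube_add_div_sq_le {𝕜 : Type*} [NormedField 𝕜] {p q z : 𝕜} {P c y : ℝ}
    (hc : 0 < c) (hy : 0 < y) (hp : ‖p‖ ≤ P * y) (hz : c * y ≤ ‖z‖) :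
    ‖p / z ^ 3 + q / z ^ 2‖ ≤ (P / c ^ 3 + ‖q‖ / c ^ 2) / y ^ 2 := by
  have hP : 0 ≤ P * y := (norm_nonneg p).trans hp
  calc ‖p / z ^ 3 + q / z ^ 2‖ ≤ ‖p‖ / ‖z‖ ^ 3 + ‖q‖ / ‖z‖ ^ 2 := by
        rw [← norm_pow, ← norm_pow, ← norm_div, ← norm_div]
        exact norm_add_le _ _
    _ ≤ P * y / (c * y) ^ 3 + ‖q‖ / (c * y) ^ 2 := by gcongr
    _ = (P / c ^ 3 + ‖q‖ / c ^ 2) / y ^ 2 := by field_simp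

lemma exists_norm_resolventDerivTwo_le {α b : ℝ} (hα : 0 ≤ α) {lam : ℂ}
    (hlam : α * π / 2 < |Complex.arg lam|) (hb : |b - 2| ≤ α) :
    ∃ C, ∀ s : ℂ, 0 < s.re → ‖resolventDerivTwo α lam s‖ ≤ C * ‖s‖ ^ (-b) := by
  obtain ⟨c, hc, hle⟩ := exists_mul_one_add_rpow_le_norm_cpow_sub hα hlam
  obtain ⟨hb₁, hb₂⟩ := abs_le.1 hb
  refine ⟨2 * α ^ 2 / c ^ 3 + ‖(α : ℂ) * (1 - α)‖ / c ^ 2, fun s hs => ?_⟩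
  have hs0 : 0 < ‖s‖ := norm_pos_iff.2 fun h => by simp [h] at hs
  have hpow : ‖s‖ ^ (α - 2) ≤ ‖s‖ ^ (-b) * (1 + ‖s‖ ^ α) ^ 2 := by
    rw [show α - 2 = -b + (α - 2 + b) by ring, Real.rpow_add hs0]
    gcongr
    exact rpow_le_one_add_rpow_sq hs0.le (by linarith) (by linarith)
  have hnum : ‖2 * (α : ℂ) ^ 2 * s ^ (α : ℂ)‖ ≤ 2 * α ^ 2 * (1 + ‖s‖ ^ α) := by
    simpa [Complex.norm_cpow_real] using
      mul_le_mul_of_nonneg_left (le_add_of_nonneg_left zero_le_one) (by positivity)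
  have hfrac := norm_div_cube_add_div_sq_le (q := (α : ℂ) * (1 - α)) hc (by positivity) hnum
    (hle s hs)
  rw [resolventDerivTwo, norm_mul, Complex.norm_cpow_real]
  calc _ ≤ ‖s‖ ^ (-b) * (1 + ‖s‖ ^ α) ^ 2 *
        ((2 * α ^ 2 / c ^ 3 + ‖(α : ℂ) * (1 - α)‖ / c ^ 2) / (1 + ‖s‖ ^ α) ^ 2) := by gcongr
    _ = _ := by field_simp

lemma differentiableOn_resolventDerivTwo {α : ℝ} (hα : 0 ≤ α) {lam : ℂ}
    (hlam : α * π / 2 < |Complex.arg lam|) :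
    DifferentiableOn ℂ (resolventDerivTwo α lam) {s | 0 < s.re} := by
  obtain ⟨c, hc, hle⟩ := exists_mul_one_add_rpow_le_norm_cpow_sub hα hlam
  have hne : ∀ s : ℂ, 0 < s.re → s ^ (α : ℂ) - lam ≠ 0 := fun s hs =>
    norm_pos_iff.1 ((by positivity : 0 < c * (1 + ‖s‖ ^ α)).trans_le (hle s hs))
  have hpow := differentiableOn_cpow_re_pos (α : ℂ)
  exact (differentiableOn_cpow_re_pos _).mul
    (((hpow.const_mul _).div ((hpow.sub_const lam).pow 3) fun s hs => pow_ne_zero 3 (hne s hs)).add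
      ((differentiableOn_const _).div ((hpow.sub_const lam).pow 2)
        fun s hs => pow_ne_zero 2 (hne s hs)))

lemma hasSum_quadratic_mul_geometric (α : ℝ) {x : ℂ} (hx : ‖x‖ < 1) :
    HasSum (fun k : ℕ => (((k * α + α) * (k * α + α + 1) : ℝ) : ℂ) * x ^ k)
      (2 * α ^ 2 / (1 - x) ^ 3 + α * (1 - α) / (1 - x) ^ 2) := by
  have h2 := (hasSum_choose_mul_geometric_of_norm_lt_one 2 hx).mul_left (2 * (α : ℂ) ^ 2)
  have h1 := (hasSum_choose_mul_geometric_of_norm_lt_one 1 hx).mul_left ((α : ℂ) * (1 - α))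
  convert! h2.add h1 using 1
  · funext k
    rw [Nat.cast_choose_two, Nat.choose_one_right]
    push_cast
    ring
  · ring

lemma summable_quadratic_mul_geometric {α q : ℝ} (hq : |q| < 1) :
    Summable fun k : ℕ => (k * α + α) * (k * α + α + 1) * q ^ k := by
  refine Complex.summable_ofReal.1 ?_
  simpa using (hasSum_quadratic_mul_geometric α (x := q) (by simpa using hq)).summable

lemma hasSum_resolventDerivTwo {α : ℝ} {lam s : ℂ} (hs : s ≠ 0) (hlam : ‖lam‖ < ‖s‖ ^ α) :
    HasSum (fun k : ℕ => ((((k * α + α) * (k * α + α + 1) : ℝ) : ℂ) * lam ^ k) •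
      s ^ (-((k * α + α + 2 : ℝ) : ℂ))) (resolventDerivTwo α lam s) := by
  have hsα : s ^ (α : ℂ) ≠ 0 := by simp [Complex.cpow_eq_zero_iff, hs]
  have hx : ‖lam / s ^ (α : ℂ)‖ < 1 := by
    rw [norm_div, Complex.norm_cpow_real]
    exact (div_lt_one (by positivity)).2 hlam
  have hres : resolventDerivTwo α lam s = s ^ (-((α + 2 : ℝ) : ℂ)) *
      (2 * α ^ 2 / (1 - lam / s ^ (α : ℂ)) ^ 3 + α * (1 - α) / (1 - lam / s ^ (α : ℂ)) ^ 2) := by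
    have hpow : s ^ ((α - 2 : ℝ) : ℂ) = s ^ (-((α + 2 : ℝ) : ℂ)) * (s ^ (α : ℂ)) ^ 2 := by
      rw [← Complex.cpow_nat_mul, ← Complex.cpow_add _ _ hs]
      push_cast
      ring_nf
    have hsub : s ^ (α : ℂ) - lam = s ^ (α : ℂ) * (1 - lam / s ^ (α : ℂ)) := by field_simp
    rw [resolventDerivTwo, hpow, hsub]
    field_simp
  have hterm : ∀ k : ℕ, s ^ (-((k * α + α + 2 : ℝ) : ℂ))
      = s ^ (-((α + 2 : ℝ) : ℂ)) / (s ^ (α : ℂ)) ^ k := fun k => by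
    rw [← Complex.cpow_nat_mul, ← Complex.cpow_sub _ _ hs]
    push_cast
    ring_nf
  rw [hres]
  refine ((hasSum_quadratic_mul_geometric α hx).mul_left _).congr_fun fun k => ?_
  rw [hterm, div_pow, smul_eq_mul]
  ring

lemma bromwich_cpow_neg_add_two {a σ u : ℝ} (ha : 0 < a) (hσ : 0 < σ) (hu : 0 < u) :
    ((a * (a + 1) : ℝ) : ℂ) * bromwich (fun s => s ^ (-((a + 2 : ℝ) : ℂ))) σ u
      = ((u ^ 2 * (u ^ (a - 1) / Real.Gamma a) : ℝ) : ℂ) := by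
  have hΓ : Real.Gamma (a + 2) = (a + 1) * (a * Real.Gamma a) := by
    rw [← Real.Gamma_add_one ha.ne', ← Real.Gamma_add_one (by positivity)]
    ring_nf
  have hpow : u ^ (a + 2 - 1) = u ^ 2 * u ^ (a - 1) := by
    rw [← Real.rpow_natCast, ← Real.rpow_add hu]
    push_cast
    ring_nf
  have hΓ0 := (Real.Gamma_pos_of_pos ha).ne'
  rw [bromwich_cpow_neg (by linarith) hσ hu, hΓ, hpow, ← Complex.ofReal_mul]
  congr 1
  field_simp

lemma norm_smul_cpow_neg_le {α σ : ℝ} (hα : 0 ≤ α) (lam : ℂ) (hσ : 0 < σ) {s : ℂ}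
    (hs : σ ≤ ‖s‖) (k : ℕ) :
    ‖((((k * α + α) * (k * α + α + 1) : ℝ) : ℂ) * lam ^ k) • s ^ (-((k * α + α + 2 : ℝ) : ℂ))‖
      ≤ (k * α + α) * (k * α + α + 1) * (‖lam‖ / σ ^ α) ^ k * ‖s‖ ^ (-(α + 2)) := by
  have hpow : ‖s‖ ^ (-(k * α + α + 2)) ≤ ((σ ^ α) ^ k)⁻¹ * ‖s‖ ^ (-(α + 2)) := by
    rw [show -(k * α + α + 2) = -(α * k) + -(α + 2) by ring, Real.rpow_add (hσ.trans_le hs),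
      ← Real.rpow_mul_natCast hσ.le, ← Real.rpow_neg hσ.le]
    gcongr ?_ * _
    exact Real.rpow_le_rpow_of_nonpos hσ hs (neg_nonpos.2 (by positivity))
  rw [← Complex.ofReal_neg, norm_smul, norm_mul, norm_pow, Complex.norm_of_nonneg (by positivity),
    Complex.norm_cpow_real]
  calc _ ≤ (k * α + α) * (k * α + α + 1) * ‖lam‖ ^ k *
        (((σ ^ α) ^ k)⁻¹ * ‖s‖ ^ (-(α + 2))) := by gcongr
    _ = _ := by rw [div_pow]; ring

lemma bromwich_resolventDerivTwo {α : ℝ} (hα : 0 < α) {lam : ℂ} {σ : ℝ} (hσ : 0 < σ)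
    (hlam : ‖lam‖ < σ ^ α) {u : ℝ} (hu : 0 < u) :
    bromwich (resolventDerivTwo α lam) σ u = u ^ 2 • mittagLefflerKernel α lam u := by
  have hle : ∀ s : ℂ, s.re = σ → σ ≤ ‖s‖ := fun s hs => hs ▸ Complex.re_le_norm s
  have hs0 : ∀ s : ℂ, s.re = σ → s ≠ 0 := fun s hs => norm_pos_iff.1 (hσ.trans_le (hle s hs))
  have hq : |‖lam‖ / σ ^ α| < 1 := by
    rw [abs_of_nonneg (by positivity)]
    exact (div_lt_one (by positivity)).2 hlam
  have hsum := hasSum_bromwich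
    (F := fun (k : ℕ) s => ((((k * α + α) * (k * α + α + 1) : ℝ) : ℂ) * lam ^ k) •
      s ^ (-((k * α + α + 2 : ℝ) : ℂ)))
    (fun k => (differentiableOn_cpow_re_pos _).continuousOn.fun_const_smul _)
    (fun k s hs => norm_smul_cpow_neg_le hα.le lam hσ (hle s hs) k)
    (summable_quadratic_mul_geometric hq) (by linarith) hσ
    (fun s hs => hasSum_resolventDerivTwo (hs0 s hs)
      (hlam.trans_le (Real.rpow_le_rpow hσ.le (hle s hs) hα.le))) u
  rw [← hsum.tsum_eq, mittagLefflerKernel, mittagLeffler, ← tsum_mul_left, ← tsum_const_smul'']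
  refine tsum_congr fun k => ?_
  have hpow : u ^ (k * α + α - 1) = u ^ (α - 1) * (u ^ α) ^ k := by
    rw [← Real.rpow_mul_natCast hu.le, ← Real.rpow_add hu]
    ring_nf
  rw [bromwich_const_smul, smul_eq_mul, mul_right_comm,
    bromwich_cpow_neg_add_two (by positivity) hσ hu, hpow, Complex.real_smul]
  push_cast
  ring

lemma exists_bromwich_resolventDerivTwo_eq {α : ℝ} (hα : 0 < α) (lam : ℂ) :
    ∃ σ > 0, ∀ u > 0,
      bromwich (resolventDerivTwo α lam) σ u = u ^ 2 • mittagLefflerKernel α lam u := by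
  refine ⟨(‖lam‖ + 1) ^ α⁻¹, by positivity, fun u hu =>
    bromwich_resolventDerivTwo hα (by positivity) ?_ hu⟩
  rw [Real.rpow_inv_rpow (by positivity) hα.ne']
  exact lt_add_one _

lemma exists_norm_mittagLefflerKernel_le {α b : ℝ} (hα : 0 < α) {lam : ℂ}
    (hlam : α * π / 2 < |Complex.arg lam|) (hb : 1 < b) (hbα : |b - 2| ≤ α) :
    ∃ K, ∀ u > 0, ‖mittagLefflerKernel α lam u‖ ≤ K * u ^ (b - 3) := by
  obtain ⟨C, hC⟩ := exists_norm_resolventDerivTwo_le hα.le hlam hbα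
  obtain ⟨K, hK⟩ :=
    exists_norm_bromwich_le (differentiableOn_resolventDerivTwo hα.le hlam) hC hb
  obtain ⟨σ, hσ, heq⟩ := exists_bromwich_resolventDerivTwo_eq hα lam
  refine ⟨K, fun u hu => le_of_mul_le_mul_left ?_ (pow_pos hu 2)⟩
  calc u ^ 2 * ‖mittagLefflerKernel α lam u‖ = ‖bromwich (resolventDerivTwo α lam) σ u‖ := by
        rw [heq u hu, norm_smul, Real.norm_of_nonneg (by positivity)]
    _ ≤ K * u ^ (b - 1) := hK σ hσ u hu
    _ = u ^ 2 * (K * u ^ (b - 3)) := by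
        rw [mul_left_comm, ← Real.rpow_natCast, ← Real.rpow_add hu]
        push_cast
        ring_nf

lemma continuousOn_mittagLefflerKernel {α : ℝ} (hα : 0 < α) {lam : ℂ}
    (hlam : α * π / 2 < |Complex.arg lam|) :
    ContinuousOn (mittagLefflerKernel α lam) (Ioi 0) := by
  obtain ⟨C, hC⟩ := exists_norm_resolventDerivTwo_le (b := 2) hα.le hlam (by simpa using hα.le)
  obtain ⟨σ, hσ, heq⟩ := exists_bromwich_resolventDerivTwo_eq hα lam
  have hcont : Continuous (bromwich (resolventDerivTwo α lam) σ) :=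
    continuous_bromwich (verticalIntegrable_of_norm_le
      (differentiableOn_resolventDerivTwo hα.le hlam).continuousOn (fun s hs => hC s (hs ▸ hσ))
      one_lt_two hσ)
  have hu2 : ∀ u ∈ Ioi (0 : ℝ), u ^ 2 ≠ 0 := fun u hu => pow_ne_zero 2 (ne_of_gt hu)
  have hinv : ContinuousOn (fun u : ℝ => (u ^ 2)⁻¹) (Ioi 0) := (continuousOn_pow 2).inv₀ hu2
  refine (hinv.smul hcont.continuousOn).congr fun u hu => ?_
  rw [Pi.smul_apply', heq u hu, inv_smul_smul₀ (hu2 u hu)]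

lemma integrableOn_mittagLefflerKernel {α : ℝ} (hα : 0 < α) {lam : ℂ}
    (hlam : α * π / 2 < |Complex.arg lam|) :
    IntegrableOn (mittagLefflerKernel α lam) (Ioi 0) := by
  have hcont := continuousOn_mittagLefflerKernel hα hlam
  have hdom : ∀ {S : Set ℝ} {b : ℝ}, MeasurableSet S → S ⊆ Ioi 0 → 1 < b → |b - 2| ≤ α →
      IntegrableOn (fun u : ℝ => u ^ (b - 3)) S →
      IntegrableOn (mittagLefflerKernel α lam) S := fun hS hSpos hb hbα hint => by
    obtain ⟨K, hK⟩ := exists_norm_mittagLefflerKernel_le hα hlam hb hbα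
    refine (hint.const_mul K).mono' ((hcont.mono hSpos).aestronglyMeasurable hS) ?_
    filter_upwards [ae_restrict_mem hS] with u hu using hK u (hSpos hu)
  rw [← Ioc_union_Ioi_eq_Ioi zero_le_one, integrableOn_union]
  constructor
  · refine hdom (b := 2 + α) measurableSet_Ioc (fun u hu => hu.1) (by linarith)
      (by simp [abs_of_pos hα]) ?_
    rw [← intervalIntegrable_iff_integrableOn_Ioc_of_le zero_le_one]
    exact intervalIntegral.intervalIntegrable_rpow' (by linarith)
  · have hb : 2 - min α 2⁻¹ < 2 := sub_lt_self 2 (by positivity)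
    refine hdom (b := 2 - min α 2⁻¹) measurableSet_Ioi (Ioi_subset_Ioi zero_le_one) ?_ ?_
      (integrableOn_Ioi_rpow_of_lt (by linarith) one_pos)
    · linarith [min_le_right α (2⁻¹ : ℝ)]
    · rw [sub_sub_cancel_left, abs_neg, abs_of_pos (by positivity)]
      exact min_le_left _ _

lemma integrableOn_abs_deriv_smul_comp {E : Type*} [NormedAddCommGroup E] [NormedSpace ℝ E]
    {κ : ℝ → E} {g g' : ℝ → ℝ} {S T : Set ℝ} (hS : MeasurableSet S)
    (hg : ∀ s ∈ S, HasDerivWithinAt g (g' s) S s) (hinj : InjOn g S) (hST : MapsTo g S T)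
    (hκ : IntegrableOn κ T) : IntegrableOn (fun s => |g' s| • κ (g s)) S :=
  (integrableOn_image_iff_integrableOn_abs_deriv_smul hS hg hinj κ).1
    (hκ.mono_set hST.image_subset)

lemma integral_norm_abs_deriv_smul_comp_le {E : Type*} [NormedAddCommGroup E] [NormedSpace ℝ E]
    {κ : ℝ → E} {g g' : ℝ → ℝ} {S T : Set ℝ} (hS : MeasurableSet S)
    (hg : ∀ s ∈ S, HasDerivWithinAt g (g' s) S s) (hinj : InjOn g S) (hST : MapsTo g S T)
    (hκ : IntegrableOn κ T) : ∫ s in S, ‖|g' s| • κ (g s)‖ ≤ ∫ u in T, ‖κ u‖ := by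
  simp only [norm_smul, norm_abs_eq_norm, Real.norm_eq_abs]
  have h := integral_image_eq_integral_abs_deriv_smul hS hg hinj fun u => ‖κ u‖
  simp only [smul_eq_mul] at h
  rw [← h]
  exact setIntegral_mono_set hκ.norm (.of_forall fun u => norm_nonneg _)
    hST.image_subset.eventuallyLE

section RpowSubstitution

variable {ρ t₀ t : ℝ}

lemma hasDerivWithinAt_rpow_sub_div (hρ : ρ ≠ 0) (ht₀ : 0 ≤ t₀) {s : ℝ} (hs : s ∈ Ioo t₀ t) :
    HasDerivWithinAt (fun s => (t ^ ρ - s ^ ρ) / ρ) (-s ^ (ρ - 1)) (Ioo t₀ t) s := by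
  have h := ((Real.hasDerivAt_rpow_const (p := ρ) (.inl (ht₀.trans_lt hs.1).ne')).const_sub
    (t ^ ρ)).div_const ρ
  convert! h.hasDerivWithinAt using 1
  field_simp

lemma injOn_rpow_sub_div (hρ : ρ ≠ 0) (ht₀ : 0 ≤ t₀) :
    InjOn (fun s => (t ^ ρ - s ^ ρ) / ρ) (Ioo t₀ t) := fun _ hx _ hy hxy =>
  (Real.rpow_left_inj (ht₀.trans hx.1.le) (ht₀.trans hy.1.le) hρ).1
    (sub_right_injective ((div_left_inj' hρ).1 hxy))

lemma mapsTo_rpow_sub_div (hρ : ρ ≠ 0) (ht₀ : 0 ≤ t₀) :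
    MapsTo (fun s => (t ^ ρ - s ^ ρ) / ρ) (Ioo t₀ t) (Ioi 0) := fun s hs => by
  have hs0 : 0 < s := ht₀.trans_lt hs.1
  rcases hρ.lt_or_gt with h | h
  · exact div_pos_of_neg_of_neg (sub_neg.2 (Real.rpow_lt_rpow_of_neg hs0 hs.2 h)) h
  · exact div_pos (sub_pos.2 (Real.rpow_lt_rpow hs0.le hs.2 h)) h

end RpowSubstitution

/-- The weight multiplying `h (ξ s)` in the integral part of `lyapunovPerron`. -/
noncomputable def lyapunovPerronKernel (α ρ : ℝ) (lam : ℂ) (t s : ℝ) : ℂ :=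
  mittagLefflerKernel α lam ((t ^ ρ - s ^ ρ) / ρ) * ((s ^ (ρ - 1) : ℝ) : ℂ)

section LyapunovPerronKernel

variable {α ρ t₀ : ℝ} {lam : ℂ}

lemma lyapunovPerronKernel_eq_smul {t s : ℝ} (hs : 0 ≤ s) :
    lyapunovPerronKernel α ρ lam t s
      = |-s ^ (ρ - 1)| • mittagLefflerKernel α lam ((t ^ ρ - s ^ ρ) / ρ) := by
  rw [abs_neg, abs_of_nonneg (Real.rpow_nonneg hs _), Complex.real_smul, mul_comm,
    lyapunovPerronKernel]

lemma integrableOn_lyapunovPerronKernel (hα : 0 < α) (hlam : α * π / 2 < |Complex.arg lam|)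
    (hρ : ρ ≠ 0) (ht₀ : 0 ≤ t₀) (t : ℝ) :
    IntegrableOn (lyapunovPerronKernel α ρ lam t) (Ioc t₀ t) := by
  rw [integrableOn_Ioc_iff_integrableOn_Ioo]
  refine (integrableOn_abs_deriv_smul_comp measurableSet_Ioo
    (fun s hs => hasDerivWithinAt_rpow_sub_div hρ ht₀ hs) (injOn_rpow_sub_div hρ ht₀)
    (mapsTo_rpow_sub_div hρ ht₀) (integrableOn_mittagLefflerKernel hα hlam)).congr_fun
    (fun s hs => ?_) measurableSet_Ioo
  exact (lyapunovPerronKernel_eq_smul (ht₀.trans hs.1.le)).symm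

lemma integral_norm_lyapunovPerronKernel_le (hα : 0 < α) (hlam : α * π / 2 < |Complex.arg lam|)
    (hρ : ρ ≠ 0) (ht₀ : 0 ≤ t₀) (t : ℝ) :
    ∫ s in Ioc t₀ t, ‖lyapunovPerronKernel α ρ lam t s‖
      ≤ ∫ u in Ioi (0 : ℝ), ‖mittagLefflerKernel α lam u‖ := by
  have hcongr : EqOn (fun s => ‖lyapunovPerronKernel α ρ lam t s‖)
      (fun s => ‖|-s ^ (ρ - 1)| • mittagLefflerKernel α lam ((t ^ ρ - s ^ ρ) / ρ)‖) (Ioo t₀ t) :=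
    fun s hs => congrArg norm (lyapunovPerronKernel_eq_smul (ht₀.trans hs.1.le))
  rw [integral_Ioc_eq_integral_Ioo, setIntegral_congr_fun measurableSet_Ioo hcongr]
  exact integral_norm_abs_deriv_smul_comp_le measurableSet_Ioo
    (fun s hs => hasDerivWithinAt_rpow_sub_div hρ ht₀ hs) (injOn_rpow_sub_div hρ ht₀)
    (mapsTo_rpow_sub_div hρ ht₀) (integrableOn_mittagLefflerKernel hα hlam)

end LyapunovPerronKernel

section SupNorm

variable {E : Type*} [NormedAddCommGroup E] {t₀ : ℝ} {ξ ξ' : ℝ → E}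

lemma norm_le_supNorm (hξ : ∃ M, ∀ t ≥ t₀, ‖ξ t‖ ≤ M) {t : ℝ} (ht : t₀ ≤ t) :
    ‖ξ t‖ ≤ supNorm t₀ ξ := by
  obtain ⟨M, hM⟩ := hξ
  exact le_ciSup (f := fun t : Ici t₀ => ‖ξ t.1‖) ⟨M, forall_mem_range.2 fun s => hM s.1 s.2⟩
    ⟨t, ht⟩

lemma supNorm_le {M : ℝ} (hM : ∀ t ≥ t₀, ‖ξ t‖ ≤ M) : supNorm t₀ ξ ≤ M :=
  have : Nonempty (Ici t₀) := ⟨⟨t₀, self_mem_Ici⟩⟩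
  ciSup_le fun t => hM t.1 t.2

lemma norm_sub_le_lipQuot_mul [ProperSpace E] {h : E → E} (hh : LocallyLipschitz h) {r : ℝ}
    {x y : E} (hx : ‖x‖ ≤ r) (hy : ‖y‖ ≤ r) : ‖h x - h y‖ ≤ lipQuot h r * ‖x - y‖ := by
  obtain ⟨K, hK⟩ := LocallyLipschitzOn.exists_lipschitzOnWith_of_compact
    (isCompact_closedBall (0 : E) r) hh.locallyLipschitzOn
  have hbdd : BddAbove (range fun q : {q : E × E // ‖q.1‖ ≤ r ∧ ‖q.2‖ ≤ r} =>
      ‖h q.1.1 - h q.1.2‖ / ‖q.1.1 - q.1.2‖) := by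
    refine ⟨K, forall_mem_range.2 fun ⟨⟨a, b⟩, ha, hb⟩ => ?_⟩
    exact div_le_of_le_mul₀ (norm_nonneg _) K.2
      (hK.norm_sub_le (mem_closedBall_zero_iff.2 ha) (mem_closedBall_zero_iff.2 hb))
  rcases eq_or_ne x y with rfl | hxy
  · simp
  · rw [← div_le_iff₀ (norm_pos_iff.2 (sub_ne_zero.2 hxy))]
    exact le_ciSup hbdd ⟨(x, y), hx, hy⟩

lemma norm_comp_sub_comp_le_lipQuot_mul_supNorm [ProperSpace E] {h : E → E}
    (hh : LocallyLipschitz h) (hξ : ∃ M, ∀ t ≥ t₀, ‖ξ t‖ ≤ M) (hξ' : ∃ M, ∀ t ≥ t₀, ‖ξ' t‖ ≤ M)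
    {t : ℝ} (ht : t₀ ≤ t) :
    ‖h (ξ t) - h (ξ' t)‖
      ≤ lipQuot h (max (supNorm t₀ ξ) (supNorm t₀ ξ')) * supNorm t₀ (fun t => ξ t - ξ' t) := by
  have hlip : 0 ≤ lipQuot h (max (supNorm t₀ ξ) (supNorm t₀ ξ')) :=
    Real.iSup_nonneg fun _ => by positivity
  have hbdd : ∃ M, ∀ t ≥ t₀, ‖ξ t - ξ' t‖ ≤ M :=
    ⟨supNorm t₀ ξ + supNorm t₀ ξ', fun t ht =>
      norm_sub_le_of_le (norm_le_supNorm hξ ht) (norm_le_supNorm hξ' ht)⟩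
  refine (norm_sub_le_lipQuot_mul hh (le_max_of_le_left (norm_le_supNorm hξ ht))
    (le_max_of_le_right (norm_le_supNorm hξ' ht))).trans ?_
  gcongr
  exact norm_le_supNorm (ξ := fun t => ξ t - ξ' t) hbdd ht

end SupNorm

section LyapunovPerron

variable {α ρ t₀ t : ℝ} {n : ℕ} {d : Fin n → ℕ} {lam : Fin n → ℂ}
  {h : (((i : Fin n) × Fin (d i)) → ℂ) → (((i : Fin n) × Fin (d i)) → ℂ)}
  {ξ ξ' : ℝ → ((i : Fin n) × Fin (d i)) → ℂ}

lemma lyapunovPerron_sub_apply (x : ((i : Fin n) × Fin (d i)) → ℂ) (p : (i : Fin n) × Fin (d i))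
    (ht : t₀ ≤ t)
    (hξ : IntegrableOn (fun s => lyapunovPerronKernel α ρ (lam p.1) t s * h (ξ s) p) (Ioc t₀ t))
    (hξ' : IntegrableOn (fun s => lyapunovPerronKernel α ρ (lam p.1) t s * h (ξ' s) p)
      (Ioc t₀ t)) :
    lyapunovPerron α ρ t₀ lam h x ξ t p - lyapunovPerron α ρ t₀ lam h x ξ' t p
      = ∫ s in Ioc t₀ t, lyapunovPerronKernel α ρ (lam p.1) t s * (h (ξ s) p - h (ξ' s) p) := by
  simp only [mul_sub]
  rw [integral_sub hξ hξ']
  simp only [lyapunovPerron, intervalIntegral.integral_of_le ht, add_sub_add_left_eq_sub,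
    lyapunovPerronKernel, mittagLefflerKernel]

lemma norm_lyapunovPerron_sub_apply_le (hα : 0 < α) (hρ : ρ ≠ 0) (ht₀ : 0 ≤ t₀)
    (hh : Continuous h) (hξ : ContinuousOn ξ (Ici t₀)) (hξ' : ContinuousOn ξ' (Ici t₀)) {D : ℝ}
    (hD : ∀ s ≥ t₀, ‖h (ξ s) - h (ξ' s)‖ ≤ D) (x : ((i : Fin n) × Fin (d i)) → ℂ)
    (ht : t₀ ≤ t) (p : (i : Fin n) × Fin (d i))
    (hlam : α * π / 2 < |Complex.arg (lam p.1)|) :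
    ‖lyapunovPerron α ρ t₀ lam h x ξ t p - lyapunovPerron α ρ t₀ lam h x ξ' t p‖
      ≤ (∫ u in Ioi (0 : ℝ), ‖mittagLefflerKernel α (lam p.1) u‖) * D := by
  have hk := integrableOn_lyapunovPerronKernel hα hlam hρ ht₀ t
  have hint : ∀ η : ℝ → ((i : Fin n) × Fin (d i)) → ℂ, ContinuousOn η (Ici t₀) →
      IntegrableOn (fun s => lyapunovPerronKernel α ρ (lam p.1) t s * h (η s) p) (Ioc t₀ t) :=
    fun η hη => hk.mul_continuousOn_of_subset
      ((continuous_apply p).comp_continuousOn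
        (hh.comp_continuousOn (hη.mono (Icc_subset_Ici_self : Icc t₀ t ⊆ Ici t₀))))
      measurableSet_Ioc isCompact_Icc Ioc_subset_Icc_self
  rw [lyapunovPerron_sub_apply x p ht (hint ξ hξ) (hint ξ' hξ')]
  calc _ ≤ ∫ s in Ioc t₀ t, ‖lyapunovPerronKernel α ρ (lam p.1) t s‖ * D := by
        refine norm_integral_le_of_norm_le (hk.norm.mul_const _) ?_
        filter_upwards [ae_restrict_mem measurableSet_Ioc] with s hs
        rw [norm_mul]
        gcongr
        exact (norm_le_pi_norm (h (ξ s) - h (ξ' s)) p).trans (hD s hs.1.le)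
    _ = (∫ s in Ioc t₀ t, ‖lyapunovPerronKernel α ρ (lam p.1) t s‖) * D :=
        integral_mul_const _ _
    _ ≤ _ := by
        have hD0 : 0 ≤ D := (norm_nonneg _).trans (hD t₀ le_rfl)
        gcongr
        exact integral_norm_lyapunovPerronKernel_le hα hlam hρ ht₀ t

end LyapunovPerron

theorem lyapunovPerron_lipschitz_general (α : ℝ) (hα : 0 < α) (n : ℕ) (lam : Fin n → ℂ)
    (hlam : ∀ i, α * π / 2 < |Complex.arg (lam i)|) :
    ∃ C > (0 : ℝ), ∀ ρ t₀ : ℝ, ρ ≠ 0 → 0 ≤ t₀ →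
      ∀ (d : Fin n → ℕ) (h : (((i : Fin n) × Fin (d i)) → ℂ) → (((i : Fin n) × Fin (d i)) → ℂ)),
        LocallyLipschitz h →
      ∀ (x : ((i : Fin n) × Fin (d i)) → ℂ) (ξ ξ' : ℝ → ((i : Fin n) × Fin (d i)) → ℂ),
        ContinuousOn ξ (Ici t₀) → (∃ M, ∀ t ≥ t₀, ‖ξ t‖ ≤ M) →
        ContinuousOn ξ' (Ici t₀) → (∃ M, ∀ t ≥ t₀, ‖ξ' t‖ ≤ M) →
        supNorm t₀ (fun t => lyapunovPerron α ρ t₀ lam h x ξ t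
            - lyapunovPerron α ρ t₀ lam h x ξ' t)
          ≤ C * lipQuot h (max (supNorm t₀ ξ) (supNorm t₀ ξ'))
              * supNorm t₀ (fun t => ξ t - ξ' t) := by
  set K : Fin n → ℝ := fun i => ∫ u in Ioi (0 : ℝ), ‖mittagLefflerKernel α (lam i) u‖
  have hK : ∀ i, 0 ≤ K i := fun i => integral_nonneg fun u => norm_nonneg _
  have hKsum : ∀ i, K i ≤ 1 + ∑ j, K j := fun i =>
    (Finset.single_le_sum (fun j _ => hK j) (Finset.mem_univ i)).trans (by simp)
  have hC : 0 < 1 + ∑ j, K j := by positivity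
  refine ⟨1 + ∑ j, K j, hC, fun ρ t₀ hρ ht₀ d h hh x ξ ξ' hξ hξb hξ' hξb' => ?_⟩
  have hD := fun s (hs : s ≥ t₀) => norm_comp_sub_comp_le_lipQuot_mul_supNorm hh hξb hξb' hs
  have hD0 := (norm_nonneg _).trans (hD t₀ le_rfl)
  rw [mul_assoc]
  refine supNorm_le fun t ht => (pi_norm_le_iff_of_nonneg (by positivity)).2 fun p => ?_
  exact (norm_lyapunovPerron_sub_apply_le hα hρ ht₀ hh.continuous hξ hξ' hD x ht p
    (hlam p.1)).trans (mul_le_mul_of_nonneg_right (hKsum p.1) hD0)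

/-- The Lyapunov–Perron operator is Lipschitz on sup-norm balls: there is a constant
`C(α,λ) > 0`, depending only on `α` and `λ = (λ₁,...,λ_n)`, such that
`‖F_x ξ − F_x ξ̂‖_∞ ≤ C(α,λ) ℓ_h(max(‖ξ‖_∞, ‖ξ̂‖_∞)) ‖ξ − ξ̂‖_∞`. -/
theorem lyapunovPerron_lipschitz (α : ℝ) (hα0 : 0 < α) (hα1 : α < 1)
    (n : ℕ) (hn : 0 < n) (lam : Fin n → ℂ)
    (hlam : ∀ i, α * Real.pi / 2 < |Complex.arg (lam i)|) :
    ∃ C > (0 : ℝ), ∀ ρ t₀ : ℝ, 0 < ρ → 0 < t₀ →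
      ∀ d : Fin n → ℕ, (∀ i, 1 ≤ d i) →
      ∀ h : (((i : Fin n) × Fin (d i)) → ℂ) → (((i : Fin n) × Fin (d i)) → ℂ),
        LocallyLipschitz h → h 0 = 0 →
      ∀ (x : ((i : Fin n) × Fin (d i)) → ℂ)
        (ξ ξ' : ℝ → ((i : Fin n) × Fin (d i)) → ℂ),
        ContinuousOn ξ (Set.Ici t₀) → (∃ M, ∀ t ≥ t₀, ‖ξ t‖ ≤ M) →
        ContinuousOn ξ' (Set.Ici t₀) → (∃ M, ∀ t ≥ t₀, ‖ξ' t‖ ≤ M) →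
        supNorm t₀ (fun t => lyapunovPerron α ρ t₀ lam h x ξ t
            - lyapunovPerron α ρ t₀ lam h x ξ' t)
          ≤ C * lipQuot h (max (supNorm t₀ ξ) (supNorm t₀ ξ'))
              * supNorm t₀ (fun t => ξ t - ξ' t) := by
  obtain ⟨C, hC, hle⟩ := lyapunovPerron_lipschitz_general α hα0 n lam hlam
  exact ⟨C, hC, fun ρ t₀ hρ ht₀ d _ h hh _ => hle ρ t₀ hρ.ne' ht₀.le d h hh⟩
end
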